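/- Let n ≥ 1, let π_n : Cycl_n → Assoc_n be the unique continuous map with π_n ∘ β_n = α_n, and let T ∈ Ψ([n+1]) be a Ψ-tree with exactly ℓ left-most nodes and exactly r right-most nodes. Then for every point x in the open stratum of Assoc_n corresponding to T, the preimage π_n^{-1}(x) ⊆ Cycl_n is homeomorphic to the geometric realization of the poset X_{ℓ,r}. (Proposition 6.1(iii) of the paper, combined with Lemma 3.2.) -/

import Mathlib

/-- The geometric realization of a poset `P` (the realization of the nerve of `P`, i.e. of
the order complex of `P`), modelled concretely as the space of finitely supported
"barycentric coordinate" functions: assignments of nonnegative weights summing to `1`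
whose support is a chain of `P`.  It is topologized as a subspace of `P → ℝ` with the
product topology. -/
def PosetRealization (P : Type*) [Preorder P] : Set (P → ℝ) :=
  {f | (∀ p, 0 ≤ f p) ∧ (Function.support f).Finite ∧ ∑ᶠ p, f p = 1 ∧
      IsChain (· ≤ ·) (Function.support f)}

/-- The map of geometric realizations induced by a map of posets `g : P → Q`
(the realization of the induced simplicial map of nerves): a point with barycentric
coordinates `f` is sent to the point whose weight at `q` is the total weight of the
fiber `g ⁻¹ {q}`. -/
noncomputable def inducedChainMap {P Q : Type*} (g : P → Q) (f : P → ℝ) : Q → ℝ :=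
  fun q => ∑ᶠ p ∈ {p | g p = q}, f p

/-- The three letters `a`, `b`, `(ab)` used to form the words of the poset `X_{ℓ,r}`. -/
inductive XLetter : Type
  | A : XLetter
  | B : XLetter
  | AB : XLetter
deriving DecidableEq

/-- Number of occurrences of the letter `a` contributed by a letter. -/
def XLetter.ca : XLetter → ℕ
  | .A => 1
  | .B => 0
  | .AB => 1

/-- Number of occurrences of the letter `b` contributed by a letter. -/
def XLetter.cb : XLetter → ℕ
  | .A => 0
  | .B => 1
  | .AB => 1

/-- One step of the order relation on words: `XStep x y` holds iff `x` is obtained from `y`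
by replacing one adjacent pair `ab` or `ba` by the single letter `(ab)`. -/
def XStep (x y : List XLetter) : Prop :=
  ∃ u v : List XLetter, x = u ++ [XLetter.AB] ++ v ∧
    (y = u ++ [XLetter.A, XLetter.B] ++ v ∨ y = u ++ [XLetter.B, XLetter.A] ++ v)

/-- The underlying set of the poset `X_{ℓ,r}`: words in the letters `a`, `b`, `(ab)` with
exactly `l` occurrences of `a` and `r` occurrences of `b`. -/
def XWord (l r : ℕ) : Type :=
  {w : List XLetter // (w.map XLetter.ca).sum = l ∧ (w.map XLetter.cb).sum = r}

theorem XStep.length_lt {x y : List XLetter} (h : XStep x y) : x.length < y.length := by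
  obtain ⟨u, v, rfl, (rfl | rfl)⟩ := h <;> simp [List.length_append]

theorem xword_le_length {x y : List XLetter} (h : Relation.ReflTransGen XStep x y) :
    x.length ≤ y.length := by
  induction h with
  | refl => exact le_rfl
  | tail _ h ih => exact ih.trans h.length_lt.le

/-- The partial order on `X_{ℓ,r}`, generated by the replacement steps. -/
instance (l r : ℕ) : PartialOrder (XWord l r) where
  le x y := Relation.ReflTransGen XStep x.1 y.1
  le_refl _ := Relation.ReflTransGen.refl
  le_trans _ _ _ h h' := Relation.ReflTransGen.trans h h'
  le_antisymm x y h h' := by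
    rcases Relation.ReflTransGen.cases_head h with heq | ⟨z, hxz, hzy⟩
    · exact Subtype.ext heq
    · exact absurd ((xword_le_length h').trans_lt
        (hxz.length_lt.trans_le (xword_le_length hzy))) (lt_irrefl _)

/-! ### Ψ-trees, encoded by systems of compatible brackets (partial parenthesizations) -/

/-- A bracket for `Ψ([n])`: an interval `{i, …, j}` of leaves with `i < j ≤ n`,
different from the full interval `{0, …, n}`.  Brackets correspond to internal
vertices (other than the root) of a `Ψ`-tree with leaves `0, 1, …, n`. -/
abbrev PsiBracket (n : ℕ) : Type :=
  {p : ℕ × ℕ // p.1 < p.2 ∧ p.2 ≤ n ∧ ¬(p.1 = 0 ∧ p.2 = n)}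

/-- The set of leaves grouped by a `Ψ`-bracket. -/
def PsiBracket.leaves {n : ℕ} (b : PsiBracket n) : Set ℕ := Set.Icc b.1.1 b.1.2

/-- Two `Ψ`-brackets are compatible when their leaf sets are disjoint or nested. -/
def PsiCompat {n : ℕ} (b c : PsiBracket n) : Prop :=
  Disjoint b.leaves c.leaves ∨ b.leaves ⊆ c.leaves ∨ c.leaves ⊆ b.leaves

/-- The poset `Ψ([n])` of `Ψ`-trees with leaves `0, 1, …, n`, encoded as systems of
pairwise compatible brackets; `T ≤ T'` (i.e. `T' ≥ T`, `T` is obtained from `T'` by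
contracting internal edges) iff the bracket system of `T` is contained in that of `T'`. -/
abbrev Psi (n : ℕ) : Type :=
  {S : Finset (PsiBracket n) // ∀ b ∈ S, ∀ c ∈ S, PsiCompat b c}


/-! ### Fans, encoded by systems of compatible brackets -/

/-- A non-trunk bracket of a fan with leaves `{* = 0, 1, …, n}`: an interval
`{i, …, j}` of leaves with `1 ≤ i < j ≤ n` (not containing the distinguished leaf `*`).
These correspond to internal vertices not lying on the trunk. -/
abbrev FanIntl (n : ℕ) : Type :=
  {p : ℕ × ℕ // 1 ≤ p.1 ∧ p.1 < p.2 ∧ p.2 ≤ n}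

/-- A trunk bracket of a fan with leaves `{* = 0, 1, …, n}`: a pair `(a, b)` with
`0 ≤ a < b ≤ n + 1`, not `(0, n+1)`, grouping the leaves `{*} ∪ {1, …, a} ∪ {b, …, n}`
(the leaves `1, …, a` lying on one side of the trunk and `b, …, n` on the other).
These correspond to internal vertices lying on the trunk (other than the root). -/
abbrev FanTrunk (n : ℕ) : Type :=
  {p : ℕ × ℕ // p.1 < p.2 ∧ p.2 ≤ n + 1 ∧ ¬(p.1 = 0 ∧ p.2 = n + 1)}

/-- A bracket of a fan: either a non-trunk bracket or a trunk bracket. -/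
abbrev FanBracket (n : ℕ) : Type := FanIntl n ⊕ FanTrunk n

/-- The set of leaves grouped by a bracket of a fan (the distinguished leaf `*` is `0`). -/
def FanBracket.leaves {n : ℕ} : FanBracket n → Set ℕ
  | .inl b => Set.Icc b.1.1 b.1.2
  | .inr p => {0} ∪ Set.Icc 1 p.1.1 ∪ Set.Icc p.1.2 n

/-- Compatibility of two brackets of a fan: two non-trunk brackets must have disjoint or
nested leaf sets; two trunk brackets must be nested as trunk brackets (each side of the
trunk separately); a non-trunk bracket `{i, …, j}` and a trunk bracket `(a, b)` must be
either disjoint (`a < i` and `j < b`) or nested on a single side of the trunk (`j ≤ a`,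
or `b ≤ i`). -/
def FanCompat {n : ℕ} : FanBracket n → FanBracket n → Prop
  | .inr p, .inr q => (p.1.1 ≤ q.1.1 ∧ q.1.2 ≤ p.1.2) ∨ (q.1.1 ≤ p.1.1 ∧ p.1.2 ≤ q.1.2)
  | .inl b, .inr p => b.1.2 ≤ p.1.1 ∨ p.1.2 ≤ b.1.1 ∨ (p.1.1 < b.1.1 ∧ b.1.2 < p.1.2)
  | .inr p, .inl b => b.1.2 ≤ p.1.1 ∨ p.1.2 ≤ b.1.1 ∨ (p.1.1 < b.1.1 ∧ b.1.2 < p.1.2)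
  | .inl b, .inl c =>
      Disjoint (FanBracket.leaves (.inl b)) (FanBracket.leaves (.inl c)) ∨
      FanBracket.leaves (.inl b) ⊆ FanBracket.leaves (.inl c) ∨
      FanBracket.leaves (.inl c) ⊆ FanBracket.leaves (.inl b)

/-- The poset `Φ(underline-n)` of fans with leaves `{* = 0, 1, …, n}`, encoded as systems
of pairwise compatible brackets; `T̂ ≤ T̂'` iff `T̂` is obtained from `T̂'` by contracting
non-leaf edges, iff the bracket system of `T̂` is contained in that of `T̂'`. -/
abbrev Fan (n : ℕ) : Type :=
  {S : Finset (FanBracket n) // ∀ x ∈ S, ∀ y ∈ S, FanCompat x y}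

open scoped ENNReal

/-- The open configuration space `Δ^n = {0 < t 1 < … < t n < 1}` of `n` points in `(0,1)`. -/
def openSimplex (n : ℕ) : Set (Fin n → ℝ) :=
  {t | (∀ i j : Fin n, i < j → t i < t j) ∧ (∀ i, 0 < t i) ∧ ∀ i, t i < 1}

/-- Extension of a configuration `t : Fin n → ℝ` by the boundary conventions
`t 0 = 0` and `t (n+1) = 1`, giving a function on `Fin (n+2)`. -/
def ext01 {n : ℕ} (t : Fin n → ℝ) : Fin (n + 2) → ℝ :=
  Fin.cons 0 (Fin.snoc t 1)

/-- Extension of a configuration `t : Fin n → ℝ` by the convention `t 0 = 0` only,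
giving a function on `Fin (n+1)`. -/
def ext0 {n : ℕ} (t : Fin n → ℝ) : Fin (n + 1) → ℝ :=
  Fin.cons 0 t

/-- The index set `T_n` of triples `0 ≤ i < j < k ≤ n+1`. -/
abbrev TriIdx (n : ℕ) : Type :=
  {p : Fin (n + 2) × Fin (n + 2) × Fin (n + 2) // p.1 < p.2.1 ∧ p.2.1 < p.2.2}

/-- The map `α_n : Δ^n → [0,1]^{T_n}`, `s_{ijk} = (t_j − t_i)/(t_k − t_i)`
(with `t_0 = 0`, `t_{n+1} = 1`), whose image's closure is the associahedron. -/
noncomputable def alphaMap (n : ℕ) (t : Fin n → ℝ) : TriIdx n → ℝ := fun q =>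
  (ext01 t q.1.2.1 - ext01 t q.1.1) / (ext01 t q.1.2.2 - ext01 t q.1.1)

/-- The `n`-dimensional associahedron: the closure of `α_n(Δ^n)`. -/
noncomputable def Assoc (n : ℕ) : Set (TriIdx n → ℝ) :=
  closure (alphaMap n '' openSimplex n)

/-- The index set `S_n` of triples of pairwise distinct elements of `{0, 1, …, n}`. -/
abbrev TripleIdx (n : ℕ) : Type :=
  {p : Fin (n + 1) × Fin (n + 1) × Fin (n + 1) // p.1 ≠ p.2.1 ∧ p.1 ≠ p.2.2 ∧ p.2.1 ≠ p.2.2}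

/-- `s̃_{kℓm}(t) = |sin π(t_ℓ − t_k)| / |sin π(t_m − t_k)| ∈ [0, +∞]`
(with the convention `t_0 = 0`). -/
noncomputable def sTilde (n : ℕ) (t : Fin n → ℝ) : TripleIdx n → ℝ≥0∞ := fun q =>
  ENNReal.ofReal |Real.sin (Real.pi * (ext0 t q.1.2.1 - ext0 t q.1.1))| /
    ENNReal.ofReal |Real.sin (Real.pi * (ext0 t q.1.2.2 - ext0 t q.1.1))|

/-- The map `β_n : Δ^n → Δ̄^n × [0,+∞]^{S_n}`. -/
noncomputable def betaMap (n : ℕ) (t : Fin n → ℝ) : (Fin n → ℝ) × (TripleIdx n → ℝ≥0∞) :=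
  (t, sTilde n t)

/-- The `n`-dimensional cyclohedron: the closure of `β_n(Δ^n)`. -/
noncomputable def Cycl (n : ℕ) : Set ((Fin n → ℝ) × (TripleIdx n → ℝ≥0∞)) :=
  closure (betaMap n '' openSimplex n)

/-- Leaves `i` and `j` of the `Ψ`-tree `S` are closer to each other than to the leaf `k`:
the nadir `n(i,j)` lies strictly above the nadir `n(j,k)`, i.e. some internal vertex of
`S` has both `i` and `j` below it but not `k`. -/
def PsiCloser {m : ℕ} (S : Psi m) (i j k : ℕ) : Prop :=
  ∃ b ∈ S.1, i ∈ b.leaves ∧ j ∈ b.leaves ∧ k ∉ b.leaves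

/-- The open stratum of `Assoc_n` corresponding to a `Ψ`-tree `S ∈ Ψ([n+1])`: the points
`x` of `Assoc_n` such that `x_{ijk} = 0` exactly when `i, j` are closer to each other
than to `k`, and `x_{ijk} = 1` exactly when `j, k` are closer to each other than to
`i`. -/
noncomputable def openStratum (n : ℕ) (S : Psi (n + 1)) : Set (TriIdx n → ℝ) :=
  {x | x ∈ Assoc n ∧ ∀ q : TriIdx n,
    (x q = 0 ↔ PsiCloser S q.1.1.1 q.1.2.1.1 q.1.2.2.1) ∧
    (x q = 1 ↔ PsiCloser S q.1.2.1.1 q.1.2.2.1 q.1.1.1)}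

/-!
Both the fiber over `x` and the realization of `X_{ℓ,r}` are homeomorphic to the space of
`ℓ × r` arrays with entries in `[-1, 1]` that are *staircases*: below an entry different from `1`
all entries are `-1`, and to the right of an entry different from `-1` all entries are `1`.

A word in `a`, `b`, `(ab)` is recorded by the relative positions of its `i`-th `a` and its `j`-th
`b`.  This identifies words with the staircases with entries in `{-1, 0, 1}`, and `v ≤ w` says that
the two sign matrices agree wherever that of `v` is nonzero.  A point `f` of the realization goes to
the convex combination `∑ f(w) sign(w)`; conversely `f(w)` is the measure of the set of heights at
which cutting off the array yields the sign matrix of `w`.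

A point of the fiber is a limit of configurations degenerating in the way prescribed by `x`, and the
only freedom left is how fast the clusters `[0, a_i]` at the left end shrink in comparison with the
clusters `[b_j, 1]` at the right end.  The limits of `t_{a_i} / (1 - t_{b_j})` in `[0, ∞]` form a
staircase with extreme values `0` and `∞`, since nested clusters shrink at different speeds.  Every
such array occurs, because the clusters of a degenerating configuration can be rescaled
independently.  It determines the point, because all ratios of chords converge once these do.
-/

/-! ### Staircase arrays -/

/-- A staircase array with extreme values `m` and `M`: below an entry different from `M` all
entries are `m`, and to the right of an entry different from `m` all entries are `M`.  Sign
matrices of words, their real convex combinations and the arrays of relative speeds of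
degenerating configurations are all of this kind. -/
structure IsStaircase {ι κ α : Type*} [LT ι] [LT κ] (m M : α) (c : ι → κ → α) : Prop where
  below : ∀ ⦃i i' j⦄, i < i' → c i j ≠ M → c i' j = m
  right : ∀ ⦃i j j'⦄, j < j' → c i j ≠ m → c i j' = M

namespace IsStaircase

variable {ι κ α β : Type*} {m M : α} {c : ι → κ → α}

theorem transpose [LT ι] [LT κ] (h : IsStaircase m M c) : IsStaircase M m fun j i => c i j :=
  ⟨fun _ _ _ hj => h.right hj, fun _ _ _ hi => h.below hi⟩

theorem submatrix [Preorder ι] [Preorder κ] {ι' κ' : Type*} [Preorder ι'] [Preorder κ']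
    (h : IsStaircase m M c) {f : ι' → ι} {g : κ' → κ} (hf : StrictMono f) (hg : StrictMono g) :
    IsStaircase m M fun i j => c (f i) (g j) :=
  ⟨fun _ _ _ hi => h.below (hf hi), fun _ _ _ hj => h.right (hg hj)⟩

theorem map_iff [LT ι] [LT κ] {φ : α → β} (hφ : Function.Injective φ) :
    IsStaircase (φ m) (φ M) (fun i j => φ (c i j)) ↔ IsStaircase m M c := by
  constructor <;> rintro ⟨below, right⟩
  · simp only [ne_eq, hφ.eq_iff] at below right
    exact ⟨below, right⟩
  · refine ⟨?_, ?_⟩ <;> simpa only [ne_eq, hφ.eq_iff]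

end IsStaircase

/-! ### The sign matrix of a word -/

/-- The position in the word `w` of the `i`-th letter `x` with `f x = 1`, where `f` takes the
values `0` and `1`; the word is thought of as being continued by infinitely many such letters. -/
def nthPos (f : XLetter → ℕ) : List XLetter → ℕ → ℕ
  | [], i => i
  | x :: w, i => if i < f x then 0 else nthPos f w (i - f x) + 1

theorem nthPos_cons_add (f : XLetter → ℕ) (x : XLetter) (w : List XLetter) (i : ℕ) :
    nthPos f (x :: w) (i + f x) = nthPos f w i + 1 := by
  simp [nthPos]

theorem strictMono_nthPos {f : XLetter → ℕ} (hf : ∀ x, f x ≤ 1) (w : List XLetter) :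
    StrictMono (nthPos f w) := by
  induction w with
  | nil => exact strictMono_id
  | cons x w ih =>
    intro i i' h
    have hx := hf x
    rw [nthPos, nthPos, if_neg (by omega : ¬i' < f x)]
    split_ifs
    · exact Nat.succ_pos _
    · exact Nat.succ_lt_succ (ih (by omega))

theorem XLetter.ca_le_one (x : XLetter) : x.ca ≤ 1 := by cases x <;> decide

theorem XLetter.cb_le_one (x : XLetter) : x.cb ≤ 1 := by cases x <;> decide

/-- The relative position of the `i`-th letter `a` and the `j`-th letter `b` of a word: `1` if the
`a` comes first, `-1` if the `b` comes first, `0` if they belong to the same letter `(ab)`. -/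
noncomputable def wordSign (w : List XLetter) (i j : ℕ) : SignType :=
  SignType.sign ((nthPos XLetter.cb w j : ℤ) - nthPos XLetter.ca w i)

theorem isStaircase_wordSign (w : List XLetter) : IsStaircase (-1) 1 (wordSign w) where
  below i i' j h := by
    have := strictMono_nthPos XLetter.ca_le_one w h
    simp only [wordSign, ne_eq, sign_eq_one_iff, sign_eq_neg_one_iff]
    omega
  right i j j' h := by
    have := strictMono_nthPos XLetter.cb_le_one w h
    simp only [wordSign, ne_eq, sign_eq_one_iff, sign_eq_neg_one_iff]
    omega

/-- The number of letters `a` of a word. -/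
def countA (w : List XLetter) : ℕ := (w.map XLetter.ca).sum

/-- The number of letters `b` of a word. -/
def countB (w : List XLetter) : ℕ := (w.map XLetter.cb).sum

theorem wordSign_cons_add (x : XLetter) (w : List XLetter) (i j : ℕ) :
    wordSign (x :: w) (i + x.ca) (j + x.cb) = wordSign w i j := by
  simp [wordSign, nthPos_cons_add]

theorem wordSign_cons_of_lt_ca {x : XLetter} {i j : ℕ} (hi : i < x.ca) (hj : x.cb ≤ j)
    (w : List XLetter) : wordSign (x :: w) i j = 1 := by
  rw [wordSign, nthPos, nthPos, if_neg hj.not_gt, if_pos hi, sign_eq_one_iff]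
  omega

theorem wordSign_cons_of_lt_cb {x : XLetter} {i j : ℕ} (hi : x.ca ≤ i) (hj : j < x.cb)
    (w : List XLetter) : wordSign (x :: w) i j = -1 := by
  rw [wordSign, nthPos, nthPos, if_pos hj, if_neg hi.not_gt, sign_eq_neg_one_iff]
  omega

theorem wordSign_cons_zero_zero (x : XLetter) (w : List XLetter) :
    wordSign (x :: w) 0 0 = SignType.sign ((x.ca : ℤ) - x.cb) := by
  cases x
  · exact (wordSign_cons_of_lt_ca one_pos le_rfl w).trans (by simp [XLetter.ca, XLetter.cb])
  · exact (wordSign_cons_of_lt_cb le_rfl one_pos w).trans (by simp [XLetter.ca, XLetter.cb])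
  · rfl

section

attribute [local simp] XLetter.ca XLetter.cb countA countB

theorem exists_wordSign_eq : ∀ {l r : ℕ} {s : Fin l → Fin r → SignType}, IsStaircase (-1) 1 s →
    ∃ w, countA w = l ∧ countB w = r ∧ ∀ i j, wordSign w (i : Fin l) (j : Fin r) = s i j
  | 0, r, _, _ => ⟨List.replicate r .B, by simp, by simp, nofun⟩
  | l + 1, 0, _, _ => ⟨List.replicate (l + 1) .A, by simp, by simp, fun _ => nofun⟩
  | l + 1, r + 1, s, hs => by
    have below i (h : s 0 0 ≠ 1) : s (Fin.succ i) 0 = -1 := hs.below i.succ_pos h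
    have right j (h : s 0 0 ≠ -1) : s 0 (Fin.succ j) = 1 := hs.right j.succ_pos h
    have hl := Fin.strictMono_succ (n := l)
    have hr := Fin.strictMono_succ (n := r)
    rcases h0 : s 0 0 with _ | _ | _
    · obtain ⟨w, rfl, rfl, hw⟩ := exists_wordSign_eq (hs.submatrix hl hr)
      refine ⟨.AB :: w, by simp [add_comm], by simp [add_comm], ?_⟩
      refine Fin.cases (Fin.cases ?_ fun j => ?_) fun i => Fin.cases ?_ fun j => ?_
      · rw [h0]; rfl
      · rw [right j (by simp [h0])]
        exact wordSign_cons_of_lt_ca one_pos (Nat.succ_pos j) w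
      · rw [below i (by simp [h0])]
        exact wordSign_cons_of_lt_cb (Nat.succ_pos i) one_pos w
      · exact (wordSign_cons_add .AB w i j).trans (hw i j)
    · obtain ⟨w, hA, rfl, hw⟩ := exists_wordSign_eq (hs.submatrix strictMono_id hr)
      refine ⟨.B :: w, by simp [← hA], by simp [add_comm], ?_⟩
      refine fun i => Fin.cases ?_ (fun j => (wordSign_cons_add .B w i j).trans (hw i j))
      rw [wordSign_cons_of_lt_cb (Nat.zero_le _) one_pos]
      exact Fin.cases h0.symm (fun i => (below i (by simp [h0])).symm) i
    · obtain ⟨w, rfl, hB, hw⟩ := exists_wordSign_eq (hs.submatrix hl strictMono_id)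
      refine ⟨.A :: w, by simp [add_comm], by simp [← hB], ?_⟩
      refine Fin.cases (fun j => ?_) (fun i j => (wordSign_cons_add .A w i j).trans (hw i j))
      rw [wordSign_cons_of_lt_ca one_pos (Nat.zero_le _)]
      exact Fin.cases h0.symm (fun j => (right j (by simp [h0])).symm) j
  termination_by l r => l + r

end

/-! ### The order of words is the order of their sign matrices -/

/-- The comparison of two words by their sign matrices: they have the same letters, and the sign
matrix of `u` is obtained from that of `w` by replacing some entries by `0`. -/
structure WordSignLE (u w : List XLetter) : Prop where
  countA_eq : countA u = countA w
  countB_eq : countB u = countB w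
  sign_eq : ∀ i < countA u, ∀ j < countB u, wordSign u i j ≠ 0 → wordSign w i j = wordSign u i j

theorem wordSign_cons_eq_of_ne_zero {u w : List XLetter} (x : XLetter)
    (h : ∀ i j, wordSign u i j ≠ 0 → wordSign w i j = wordSign u i j) (i j : ℕ)
    (hx : wordSign (x :: u) i j ≠ 0) : wordSign (x :: w) i j = wordSign (x :: u) i j := by
  rcases lt_or_ge i x.ca with hi | hi <;> rcases lt_or_ge j x.cb with hj | hj
  · simp [wordSign, nthPos, hi, hj]
  · rw [wordSign_cons_of_lt_ca hi hj, wordSign_cons_of_lt_ca hi hj]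
  · rw [wordSign_cons_of_lt_cb hi hj, wordSign_cons_of_lt_cb hi hj]
  · obtain ⟨i, rfl⟩ := Nat.exists_eq_add_of_le' hi
    obtain ⟨j, rfl⟩ := Nat.exists_eq_add_of_le' hj
    rw [wordSign_cons_add] at hx
    rw [wordSign_cons_add, wordSign_cons_add, h i j hx]

theorem wordSign_eq_of_AB_ne_zero {q : List XLetter} {i j : ℕ} (h : wordSign (.AB :: q) i j ≠ 0) :
    wordSign (.A :: .B :: q) i j = wordSign (.AB :: q) i j ∧
      wordSign (.B :: .A :: q) i j = wordSign (.AB :: q) i j := by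
  have hBA (i j : ℕ) : wordSign (.B :: .A :: q) i (j + 1) = wordSign (.A :: q) i j :=
    wordSign_cons_add .B _ i j
  have hAB (i j : ℕ) : wordSign (.A :: .B :: q) (i + 1) j = wordSign (.B :: q) i j :=
    wordSign_cons_add .A _ i j
  rcases i with _ | i <;> rcases j with _ | j
  · exact absurd (sign_zero (α := ℤ)) h
  · rw [hBA, wordSign_cons_of_lt_ca (x := .AB) one_pos (Nat.succ_pos j)]
    exact ⟨wordSign_cons_of_lt_ca one_pos (Nat.zero_le _) _,
      wordSign_cons_of_lt_ca one_pos (Nat.zero_le _) _⟩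
  · rw [hAB, wordSign_cons_of_lt_cb (x := .AB) (Nat.succ_pos i) one_pos]
    exact ⟨wordSign_cons_of_lt_cb (Nat.zero_le _) one_pos _,
      wordSign_cons_of_lt_cb (Nat.zero_le _) one_pos _⟩
  · rw [hAB, hBA]
    exact ⟨(wordSign_cons_add .B q i j).trans (wordSign_cons_add .AB q i j).symm,
      (wordSign_cons_add .A q i j).trans (wordSign_cons_add .AB q i j).symm⟩

theorem XStep.wordSign_eq {u w : List XLetter} (h : XStep u w) (i j : ℕ)
    (hu : wordSign u i j ≠ 0) : wordSign w i j = wordSign u i j := by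
  obtain ⟨p, q, rfl, hw⟩ := h
  induction p generalizing w i j with
  | nil =>
    rcases hw with rfl | rfl
    · exact (wordSign_eq_of_AB_ne_zero hu).1
    · exact (wordSign_eq_of_AB_ne_zero hu).2
  | cons x p ih =>
    rcases hw with rfl | rfl
    · exact wordSign_cons_eq_of_ne_zero x (fun i j => ih i j (Or.inl rfl)) i j hu
    · exact wordSign_cons_eq_of_ne_zero x (fun i j => ih i j (Or.inr rfl)) i j hu

theorem wordSign_eq_of_reflTransGen {u w : List XLetter} (h : Relation.ReflTransGen XStep u w)
    (i j : ℕ) (hu : wordSign u i j ≠ 0) : wordSign w i j = wordSign u i j := by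
  induction h with
  | refl => rfl
  | tail _ h ih => rw [h.wordSign_eq i j (by rwa [ih]), ih]

theorem reflTransGen_cons {u w : List XLetter} (x : XLetter)
    (h : Relation.ReflTransGen XStep u w) : Relation.ReflTransGen XStep (x :: u) (x :: w) := by
  refine Relation.ReflTransGen.lift (x :: ·) ?_ _ _ h
  rintro _ _ ⟨p, q, rfl, rfl | rfl⟩
  · exact ⟨x :: p, q, rfl, Or.inl rfl⟩
  · exact ⟨x :: p, q, rfl, Or.inr rfl⟩

namespace WordSignLE

attribute [local simp] countA countB XLetter.ca XLetter.cb

variable {u w : List XLetter}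

theorem of_cons {x : XLetter} (h : WordSignLE (x :: u) (x :: w)) : WordSignLE u w where
  countA_eq := by simpa using h.countA_eq
  countB_eq := by simpa using h.countB_eq
  sign_eq i hi j hj := by
    have := h.sign_eq (i + x.ca) (by simpa [add_comm] using hi) (j + x.cb)
      (by simpa [add_comm] using hj)
    simpa only [wordSign_cons_add] using this

theorem of_cons_AB_A (h : WordSignLE (.AB :: u) (.A :: w)) : WordSignLE (.B :: u) w where
  countA_eq := by simpa using h.countA_eq
  countB_eq := by simpa using h.countB_eq
  sign_eq i hi j hj := by
    have := h.sign_eq (i + 1) (by simpa [add_comm] using hi) j (by simpa using hj)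
    simpa [wordSign, nthPos] using this

theorem of_cons_AB_B (h : WordSignLE (.AB :: u) (.B :: w)) : WordSignLE (.A :: u) w where
  countA_eq := by simpa using h.countA_eq
  countB_eq := by simpa using h.countB_eq
  sign_eq i hi j hj := by
    have := h.sign_eq i (by simpa using hi) (j + 1) (by simpa [add_comm] using hj)
    simpa [wordSign, nthPos] using this

theorem head_eq {x y : XLetter} (h : WordSignLE (x :: u) (y :: w)) : x = y ∨ x = .AB := by
  have hA := h.countA_eq
  have hB := h.countB_eq
  by_contra! hne
  have := h.sign_eq 0 (by cases x <;> cases y <;> grind [countA, countB, XLetter.ca, XLetter.cb])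
    0 (by cases x <;> cases y <;> grind [countA, countB, XLetter.ca, XLetter.cb])
  simp only [wordSign_cons_zero_zero] at this
  cases x <;> cases y <;> revert this hne <;> decide

theorem reflTransGen : ∀ {u w : List XLetter}, WordSignLE u w → Relation.ReflTransGen XStep u w
  | [], [], _ => .refl
  | [], x :: w, h => by
    have hA := h.countA_eq
    have hB := h.countB_eq
    cases x <;> grind [countA, countB, XLetter.ca, XLetter.cb]
  | x :: u, [], h => by
    have hA := h.countA_eq
    have hB := h.countB_eq
    cases x <;> grind [countA, countB, XLetter.ca, XLetter.cb]
  | .A :: u, .A :: w, h => reflTransGen_cons _ h.of_cons.reflTransGen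
  | .B :: u, .B :: w, h => reflTransGen_cons _ h.of_cons.reflTransGen
  | .AB :: u, .AB :: w, h => reflTransGen_cons _ h.of_cons.reflTransGen
  | .AB :: u, .A :: w, h =>
    .head ⟨[], u, rfl, Or.inl rfl⟩ (reflTransGen_cons .A h.of_cons_AB_A.reflTransGen)
  | .AB :: u, .B :: w, h =>
    .head ⟨[], u, rfl, Or.inr rfl⟩ (reflTransGen_cons .B h.of_cons_AB_B.reflTransGen)
  | .A :: _, .B :: _, h | .A :: _, .AB :: _, h | .B :: _, .A :: _, h | .B :: _, .AB :: _, h => by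
    simpa using h.head_eq
  termination_by u w => u.length + w.length

end WordSignLE

/-! ### The sign representation of `X_{l,r}` -/

namespace XWord

variable {l r : ℕ}

/-- The sign matrix of an element of `X_{l,r}`. -/
noncomputable def sign (w : XWord l r) (p : Fin l × Fin r) : SignType :=
  wordSign w.1 p.1 p.2

theorem le_iff_sign {u w : XWord l r} : u ≤ w ↔ ∀ p, u.sign p ≠ 0 → w.sign p = u.sign p := by
  refine ⟨fun h p => wordSign_eq_of_reflTransGen h _ _, fun h => WordSignLE.reflTransGen ?_⟩
  refine ⟨u.2.1.trans w.2.1.symm, u.2.2.trans w.2.2.symm, fun i hi j hj => ?_⟩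
  exact h (⟨i, hi.trans_eq u.2.1⟩, ⟨j, hj.trans_eq u.2.2⟩)

theorem exists_sign_eq_iff {s : Fin l × Fin r → SignType} :
    (∃ w : XWord l r, w.sign = s) ↔ IsStaircase (-1) 1 fun i j => s (i, j) := by
  constructor
  · rintro ⟨w, rfl⟩
    exact (isStaircase_wordSign w.1).submatrix Fin.val_strictMono Fin.val_strictMono
  · intro hs
    obtain ⟨w, hA, hB, hw⟩ := exists_wordSign_eq hs
    exact ⟨⟨w, hA, hB⟩, funext fun p => hw p.1 p.2⟩

end XWord

/-! ### Geometric realizations as spaces of real vectors -/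

section Realization

open MeasureTheory Set

variable {P ι : Type*}

theorem isChain_support_iff [Preorder P] {f : P → ℝ} :
    IsChain (· ≤ ·) (Function.support f) ↔ ∀ u w, ¬u ≤ w → ¬w ≤ u → f u * f w = 0 := by
  constructor
  · intro h u w huw hwu
    by_contra hne
    exact (h.total (left_ne_zero_of_mul hne) (right_ne_zero_of_mul hne)).elim huw hwu
  · intro h u hu w hw _
    by_contra! hne
    exact mul_ne_zero hu hw (h u w hne.1 hne.2)

theorem mem_PosetRealization_iff [Fintype P] [Preorder P] {f : P → ℝ} :
    f ∈ PosetRealization P ↔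
      (∀ w, 0 ≤ f w) ∧ ∑ w, f w = 1 ∧ IsChain (· ≤ ·) (Function.support f) := by
  simp [PosetRealization, finsum_eq_sum_of_fintype, Set.toFinite]

theorem isCompact_PosetRealization [Finite P] [Preorder P] : IsCompact (PosetRealization P) := by
  have := Fintype.ofFinite P
  refine (isCompact_univ_pi fun _ : P => isCompact_Icc (a := (0 : ℝ)) (b := 1)).of_isClosed_subset
    ?_ fun f hf w _ => ?_
  · have : PosetRealization P = {f | (∀ w, 0 ≤ f w) ∧ ∑ w, f w = 1 ∧
        ∀ u w, ¬u ≤ w → ¬w ≤ u → f u * f w = 0} := by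
      ext f
      rw [mem_PosetRealization_iff, isChain_support_iff, Set.mem_ofPred_eq]
    rw [this]
    simp only [ofPred_and, ofPred_forall]
    refine (isClosed_iInter fun w => isClosed_le continuous_const (continuous_apply w)).inter
      ((isClosed_eq (by fun_prop) continuous_const).inter ?_)
    exact isClosed_iInter fun u => isClosed_iInter fun w => isClosed_iInter fun _ =>
      isClosed_iInter fun _ => isClosed_eq (by fun_prop) continuous_const
  · obtain ⟨h0, h1, -⟩ := mem_PosetRealization_iff.1 hf
    exact ⟨h0 w, h1 ▸ Finset.single_le_sum (fun u _ => h0 u) (Finset.mem_univ w)⟩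

/-- A representation of a poset by sign vectors: the order of `P` is the conformal order, in which
going down replaces some of the signs by `0`. -/
def IsSignRepresentation [LE P] (σ : P → ι → SignType) : Prop :=
  ∀ ⦃u w⦄, u ≤ w ↔ ∀ p, σ u p ≠ 0 → σ w p = σ u p

/-- The combination of sign vectors with given weights. -/
noncomputable def signSum [Fintype P] (σ : P → ι → SignType) (f : P → ℝ) (p : ι) : ℝ :=
  ∑ w, f w * (σ w p : ℝ)

/-- The signs of those coordinates of `c` whose absolute value exceeds `x`. -/
noncomputable def cutoff (c : ι → ℝ) (x : ℝ) (p : ι) : SignType :=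
  if x < |c p| then SignType.sign (c p) else 0

/-- The vectors with coordinates in `[-1, 1]` all of whose cutoffs at heights in `[0, 1)` belong
to the given set of sign vectors `σ w`. -/
def cutoffSpace (σ : P → ι → SignType) : Set (ι → ℝ) :=
  {c | (∀ p, |c p| ≤ 1) ∧ ∀ x ∈ Ico (0 : ℝ) 1, ∃ w, σ w = cutoff c x}

/-- The heights in `[0, 1)` at which the cutoff of `c` is the given sign vector. -/
def cutoffHeights (c : ι → ℝ) (s : ι → SignType) : Set ℝ :=
  {x ∈ Ico (0 : ℝ) 1 | s = cutoff c x}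

theorem exists_sum_indicator_le [Fintype P] [PartialOrder P] {f : P → ℝ}
    (hf : f ∈ PosetRealization P) {s : Set P} (hs : 0 < ∑ u, s.indicator f u) :
    ∃ w ∈ s, f w ≠ 0 ∧ ∑ u, s.indicator f u ≤ ∑ u, (Ici w).indicator f u := by
  obtain ⟨h0, -, hc⟩ := mem_PosetRealization_iff.1 hf
  obtain ⟨v, -, hv⟩ := Finset.exists_ne_zero_of_sum_ne_zero hs.ne'
  have hvs := mem_of_indicator_ne_zero hv
  obtain ⟨w, ⟨hws, hw⟩, hmin⟩ := (toFinite (s ∩ Function.support f)).exists_minimal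
    ⟨v, hvs, by rwa [indicator_of_mem hvs] at hv⟩
  refine ⟨w, hws, hw, Finset.sum_le_sum fun u _ => ?_⟩
  rcases eq_or_ne (s.indicator f u) 0 with hu | hu
  · exact hu ▸ indicator_nonneg (fun u _ => h0 u) u
  have hus := mem_of_indicator_ne_zero hu
  rw [indicator_of_mem hus] at hu ⊢
  have hwu : w ≤ u := (hc.total hw hu).elim id (hmin ⟨hus, hu⟩)
  rw [indicator_of_mem (mem_Ici.2 hwu)]

theorem exists_mem_Ico_sum_indicator [Fintype P] [PartialOrder P] {f : P → ℝ}
    (hf : f ∈ PosetRealization P) {x : ℝ} (hx : x ∈ Ico (0 : ℝ) 1) :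
    ∃ w, f w ≠ 0 ∧ x ∈ Ico (∑ u, (Ioi w).indicator f u) (∑ u, (Ici w).indicator f u) := by
  have hsum : ∑ u, univ.indicator f u = 1 := by simp [(mem_PosetRealization_iff.1 hf).2.1]
  obtain ⟨v, -, hv, hle⟩ := exists_sum_indicator_le hf (hsum ▸ one_pos)
  obtain ⟨w, ⟨hw, hxw⟩, hmax⟩ := (toFinite {w | f w ≠ 0 ∧ x < ∑ u, (Ici w).indicator f u})
    |>.exists_maximal ⟨v, hv, hx.2.trans_le (hsum ▸ hle)⟩
  refine ⟨w, hw, not_lt.1 fun hlt => ?_, hxw⟩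
  obtain ⟨v, hwv, hv, hle⟩ := exists_sum_indicator_le hf (hx.1.trans_lt hlt)
  exact (hmax ⟨hv, hlt.trans_le hle⟩ (le_of_lt hwv)).not_gt hwv

theorem cutoff_ne_zero_iff {c : ι → ℝ} {x : ℝ} (hx : 0 ≤ x) {p : ι} :
    cutoff c x p ≠ 0 ↔ x < |c p| := by
  rw [cutoff, ne_eq, ite_eq_right_iff, sign_eq_zero_iff]
  refine ⟨fun h => ?_, fun h hc => h.not_ge (by simpa [hc h] using hx)⟩
  by_contra hlt
  exact h fun h' => absurd h' hlt

theorem cutoff_eq_of_le {c : ι → ℝ} {x y : ℝ} (hx : 0 ≤ x) (hxy : x ≤ y) {p : ι}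
    (hp : cutoff c y p ≠ 0) : cutoff c x p = cutoff c y p := by
  have hy := (cutoff_ne_zero_iff (hx.trans hxy)).1 hp
  rw [cutoff, cutoff, if_pos hy, if_pos (hxy.trans_lt hy)]

theorem cutoff_eq_of_lt_mul {c : ι → ℝ} {x : ℝ} {p : ι} {s : SignType} (hx : 0 ≤ x)
    (h : x < c p * (s : ℝ)) : cutoff c x p = s := by
  rcases s with _ | _ | _
  · exact absurd h (by simpa using hx)
  · have hc : c p < -x := by simpa [lt_neg] using h
    rw [cutoff, if_pos (lt_abs.2 (Or.inr (lt_neg.1 hc))), sign_neg (by linarith)]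
    rfl
  · have hc : x < c p := by simpa using h
    rw [cutoff, if_pos (lt_abs.2 (Or.inl hc)), sign_pos (by linarith)]
    rfl

theorem abs_mul_sign_le {a : ℝ} (ha : 0 ≤ a) (s : SignType) : |a * (s : ℝ)| ≤ a := by
  rw [abs_mul, abs_of_nonneg ha]
  refine mul_le_of_le_one_right ha ?_
  rcases s with _ | _ | _ <;> simp

/-- The total length of the heights in `[0, 1)` at which the cutoff of `c` is `σ w`; these are the
barycentric coordinates of `c` with respect to the sign vectors. -/
noncomputable def cutoffWeight (σ : P → ι → SignType) (c : ι → ℝ) (w : P) : ℝ :=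
  volume.real (cutoffHeights c (σ w))

theorem measure_cutoffHeights_ne_top (c : ι → ℝ) (s : ι → SignType) :
    volume (cutoffHeights c s) ≠ ⊤ :=
  ne_top_of_le_ne_top (by simp) (measure_mono (sep_subset (Ico (0 : ℝ) 1) _))

section

variable [Fintype P] [PartialOrder P] {σ : P → ι → SignType} (hσ : IsSignRepresentation σ)
include hσ

theorem cutoff_signSum {f : P → ℝ} (hf : f ∈ PosetRealization P) {w : P} (hw : f w ≠ 0) {x : ℝ}
    (hx0 : 0 ≤ x) (hx : x ∈ Ico (∑ u, (Ioi w).indicator f u) (∑ u, (Ici w).indicator f u)) :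
    cutoff (signSum σ f) x = σ w := by
  obtain ⟨h0, -, hc⟩ := mem_PosetRealization_iff.1 hf
  ext p
  have hlow u (hu : f u ≠ 0) (hwu : ¬w < u) (hp : σ u p ≠ 0) : σ w p = σ u p := by
    rcases hc.total hu hw with h | h
    · exact hσ.1 h p hp
    · rw [h.eq_of_not_lt hwu]
  by_cases hs : σ w p = 0
  · have hle : |signSum σ f p| ≤ ∑ u, (Ioi w).indicator f u := by
      refine (Finset.abs_sum_le_sum_abs _ _).trans (Finset.sum_le_sum fun u _ => ?_)
      by_cases hwu : w < u
      · exact (abs_mul_sign_le (h0 u) _).trans_eq (indicator_of_mem (mem_Ioi.2 hwu) f).symm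
      · have : f u = 0 ∨ σ u p = 0 := by
          by_contra! h
          exact h.2 ((hlow u h.1 hwu h.2).symm.trans hs)
        rcases this with h | h <;> simp [h, indicator_nonneg, h0]
    rw [hs, cutoff, if_neg (hle.trans hx.1).not_gt]
  · refine cutoff_eq_of_lt_mul hx0 (hx.2.trans_le ?_)
    rw [signSum, Finset.sum_mul]
    refine Finset.sum_le_sum fun u _ => ?_
    by_cases hu : f u = 0
    · exact (indicator_le_self' (fun _ _ => h0 _) u).trans_eq (by simp [hu])
    by_cases hus : σ u p = σ w p
    · have : (σ w p : ℝ) * σ w p = 1 := by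
        rcases h : σ w p with _ | _ | _ <;> simp_all
      rw [hus, mul_assoc, this, mul_one]
      exact indicator_le_self' (fun _ _ => h0 u) u
    · have hwu : ¬w ≤ u := fun h => hus (hσ.1 h p hs)
      have hu0 : σ u p = 0 := by
        by_contra h
        exact hus (hlow u hu (fun h => hwu h.le) h).symm
      simp [hu0, hwu]

theorem signSum_mem_cutoffSpace {f : P → ℝ} (hf : f ∈ PosetRealization P) :
    signSum σ f ∈ cutoffSpace σ := by
  refine ⟨fun p => ?_, fun x hx => ?_⟩
  · obtain ⟨h0, h1, -⟩ := mem_PosetRealization_iff.1 hf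
    exact (Finset.abs_sum_le_sum_abs _ _).trans
      (h1 ▸ Finset.sum_le_sum fun u _ => abs_mul_sign_le (h0 u) _)
  · obtain ⟨w, hw, hxw⟩ := exists_mem_Ico_sum_indicator hf hx
    exact ⟨w, (cutoff_signSum hσ hf hw hx.1 hxw).symm⟩

theorem le_cutoffWeight_signSum {f : P → ℝ} (hf : f ∈ PosetRealization P) (w : P) :
    f w ≤ cutoffWeight σ (signSum σ f) w := by
  by_cases hw : f w = 0
  · exact hw ▸ measureReal_nonneg
  obtain ⟨h0, h1, -⟩ := mem_PosetRealization_iff.1 hf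
  have hsum : ∑ u, (Ici w).indicator f u = f w + ∑ u, (Ioi w).indicator f u := by
    classical
    simp only [← Ioi_insert, insert_eq]
    rw [indicator_union_of_disjoint (by simp), Finset.sum_add_distrib]
    simp [indicator_apply]
  have hle : ∑ u, (Ici w).indicator f u ≤ 1 :=
    h1 ▸ Finset.sum_le_sum fun u _ => indicator_le_self' (fun _ _ => h0 u) u
  have hnonneg : 0 ≤ ∑ u, (Ioi w).indicator f u :=
    Finset.sum_nonneg fun u _ => indicator_nonneg (fun _ _ => h0 _) u
  calc f w = volume.real (Ico (∑ u, (Ioi w).indicator f u) (∑ u, (Ici w).indicator f u)) := by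
        rw [Real.volume_real_Ico_of_le (by linarith [h0 w]), hsum, add_sub_cancel_right]
    _ ≤ _ := by
        refine measureReal_mono (fun x hx => ?_) (measure_cutoffHeights_ne_top _ _)
        have hx0 := hnonneg.trans hx.1
        exact ⟨⟨hx0, hx.2.trans_le hle⟩, (cutoff_signSum hσ hf hw hx0 hx).symm⟩

end

section

variable [Finite ι] (c : ι → ℝ)

theorem measurableSet_cutoffHeights (s : ι → SignType) : MeasurableSet (cutoffHeights c s) := by
  have : cutoffHeights c s = Ico 0 1 ∩
      ⋂ p, (Iio |c p| ∩ {_x | s p = SignType.sign (c p)} ∪ (Iio |c p|)ᶜ ∩ {_x | s p = 0}) := by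
    ext x
    simp [cutoffHeights, funext_iff, cutoff, eq_ite_iff]
  rw [this]
  exact measurableSet_Ico.inter (.iInter fun p => (measurableSet_Iio.inter (.const _)).union
    (measurableSet_Iio.compl.inter (.const _)))

variable {c} {σ : P → ι → SignType}

theorem sum_cutoffWeight (hσ : Function.Injective σ) (s : Finset P) :
    ∑ w ∈ s, cutoffWeight σ c w = volume.real (⋃ w ∈ s, cutoffHeights c (σ w)) :=
  (measureReal_biUnion_finset
    (fun _ _ _ _ huw => Set.disjoint_left.2 fun _ hu hw => huw (hσ (hu.2.trans hw.2.symm)))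
    (fun w _ => measurableSet_cutoffHeights c (σ w))
    fun w _ => measure_cutoffHeights_ne_top c (σ w)).symm

end

theorem IsSignRepresentation.injective [PartialOrder P] {σ : P → ι → SignType}
    (hσ : IsSignRepresentation σ) : Function.Injective σ := fun _ _ h =>
  le_antisymm (hσ.2 fun _ _ => by rw [h]) (hσ.2 fun _ _ => by rw [h])

section

variable [PartialOrder P] [Finite ι] {σ : P → ι → SignType}
  (hσ : IsSignRepresentation σ)
include hσ

theorem cutoffWeight_signSum [Fintype P] {f : P → ℝ} (hf : f ∈ PosetRealization P) :
    cutoffWeight σ (signSum σ f) = f := by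
  have hle w (_ : w ∈ Finset.univ) := le_cutoffWeight_signSum hσ hf w
  have hsum : ∑ w, cutoffWeight σ (signSum σ f) w ≤ ∑ w, f w := by
    rw [sum_cutoffWeight hσ.injective, (mem_PosetRealization_iff.1 hf).2.1]
    refine (measureReal_mono (s₂ := Ico (0 : ℝ) 1) ?_ (by simp)).trans_eq (by simp)
    exact iUnion₂_subset fun w _ => sep_subset _ _
  have := (Finset.sum_eq_sum_iff_of_le hle).1 ((Finset.sum_le_sum hle).antisymm hsum)
  exact funext fun w => (this w (Finset.mem_univ w)).symm

theorem cutoffWeight_mem_PosetRealization [Finite P] {c : ι → ℝ} (hc : c ∈ cutoffSpace σ) :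
    cutoffWeight σ c ∈ PosetRealization P := by
  have := Fintype.ofFinite P
  refine mem_PosetRealization_iff.2 ⟨fun w => measureReal_nonneg, ?_, fun u hu w hw _ => ?_⟩
  · have : ⋃ w ∈ Finset.univ, cutoffHeights c (σ w) = Ico 0 1 :=
      (iUnion₂_subset fun w _ => sep_subset _ _).antisymm fun x hx => by
        obtain ⟨w, hw⟩ := hc.2 x hx
        exact mem_iUnion₂.2 ⟨w, Finset.mem_univ w, hx, hw⟩
    rw [sum_cutoffWeight hσ.injective, this]
    simp
  · obtain ⟨x, ⟨hx0, -⟩, hx⟩ := nonempty_of_measureReal_ne_zero hu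
    obtain ⟨y, ⟨hy0, -⟩, hy⟩ := nonempty_of_measureReal_ne_zero hw
    rcases le_total x y with hxy | hyx
    · exact Or.inr (hσ.2 fun p hp => hx ▸ hy ▸ cutoff_eq_of_le hx0 hxy (hy ▸ hp))
    · exact Or.inl (hσ.2 fun p hp => hx ▸ hy ▸ cutoff_eq_of_le hy0 hyx (hx ▸ hp))

theorem signSum_cutoffWeight [Fintype P] {c : ι → ℝ} (hc : c ∈ cutoffSpace σ) :
    signSum σ (cutoffWeight σ c) = c := by
  classical
  ext p
  have hterm w : cutoffWeight σ c w * (σ w p : ℝ) =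
      if σ w p ≠ 0 then cutoffWeight σ c w * (SignType.sign (c p) : ℝ) else 0 := by
    split_ifs with hp
    · rcases eq_or_ne (cutoffWeight σ c w) 0 with hw | hw
      · simp [hw]
      · obtain ⟨x, ⟨hx0, -⟩, hx⟩ := nonempty_of_measureReal_ne_zero hw
        rw [hx, cutoff_ne_zero_iff hx0] at hp
        rw [hx, cutoff, if_pos hp]
    · simp [not_not.1 hp]
  have hunion : ⋃ w ∈ ({w | σ w p ≠ 0} : Finset P), cutoffHeights c (σ w) = Ico 0 |c p| := by
    ext x
    simp only [mem_iUnion, Finset.mem_filter, Finset.mem_univ, true_and, exists_prop]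
    constructor
    · rintro ⟨w, hp, ⟨hx0, -⟩, hx⟩
      exact ⟨hx0, (cutoff_ne_zero_iff hx0).1 (hx ▸ hp)⟩
    · rintro ⟨hx0, hxp⟩
      have hx1 : x ∈ Ico (0 : ℝ) 1 := ⟨hx0, hxp.trans_le (hc.1 p)⟩
      obtain ⟨w, hw⟩ := hc.2 x hx1
      exact ⟨w, hw ▸ (cutoff_ne_zero_iff hx0).2 hxp, hx1, hw⟩
  simp only [signSum, hterm]
  rw [← Finset.sum_filter, ← Finset.sum_mul, sum_cutoffWeight hσ.injective, hunion,
    Real.volume_real_Ico_of_le (abs_nonneg _), sub_zero, mul_comm, sign_mul_abs]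

theorem nonempty_PosetRealization_homeomorph_cutoffSpace [Finite P] :
    Nonempty (PosetRealization P ≃ₜ cutoffSpace σ) := by
  have := Fintype.ofFinite P
  have : CompactSpace (PosetRealization P) :=
    isCompact_iff_compactSpace.1 isCompact_PosetRealization
  let e : PosetRealization P ≃ cutoffSpace σ :=
    { toFun f := ⟨signSum σ f, signSum_mem_cutoffSpace hσ f.2⟩
      invFun c := ⟨cutoffWeight σ c, cutoffWeight_mem_PosetRealization hσ c.2⟩
      left_inv f := Subtype.ext (cutoffWeight_signSum hσ f.2)
      right_inv c := Subtype.ext (signSum_cutoffWeight hσ c.2) }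
  refine ⟨Continuous.homeoOfEquivCompactToT2 (f := e) (.subtype_mk ?_ _)⟩
  exact continuous_pi fun p => continuous_finsetSum _ fun w _ =>
    ((continuous_apply w).comp continuous_subtype_val).mul_const _

end

end Realization

/-! ### The cutoff space of the word poset -/

section CutoffSpace

open Set

theorem cutoff_eq_one_iff {ι : Type*} {c : ι → ℝ} {x : ℝ} (hx : 0 ≤ x) {p : ι} :
    cutoff c x p = 1 ↔ x < c p := by
  refine ⟨fun h => ?_, fun h => cutoff_eq_of_lt_mul hx (by simpa using h)⟩
  have hp := (cutoff_ne_zero_iff (c := c) hx (p := p)).1 (by simp [h])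
  rw [cutoff, if_pos hp, sign_eq_one_iff] at h
  rwa [abs_of_pos h] at hp

theorem cutoff_eq_neg_one_iff {ι : Type*} {c : ι → ℝ} {x : ℝ} (hx : 0 ≤ x) {p : ι} :
    cutoff c x p = -1 ↔ x < -c p := by
  refine ⟨fun h => ?_, fun h => cutoff_eq_of_lt_mul hx (by simpa using h)⟩
  have hp := (cutoff_ne_zero_iff (c := c) hx (p := p)).1 (by simp [h])
  rw [cutoff, if_pos hp, sign_eq_neg_one_iff] at h
  rwa [abs_of_neg h] at hp

theorem ne_one_imp_eq_neg_one_iff {a b : ℝ} (ha : a ≤ 1) (hb : -1 ≤ b) :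
    (a ≠ 1 → b = -1) ↔ ∀ x ∈ Ico (0 : ℝ) 1, ¬x < a → x < -b := by
  constructor
  · intro h x hx hxa
    rw [h (by rintro rfl; exact hxa hx.2)]
    simpa using hx.2
  · intro h ha1
    by_contra hb1
    have ha2 := lt_of_le_of_ne ha ha1
    have hb2 : -b < 1 := by linarith [lt_of_le_of_ne' hb hb1]
    have := h (max (max a (-b)) 0) ⟨le_max_right _ _, by simp [ha2, hb2]⟩
      (by simp)
    simp at this

theorem isStaircase_iff_cutoff {ι κ : Type*} [Preorder ι] [Preorder κ] {c : ι × κ → ℝ}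
    (hc : ∀ p, |c p| ≤ 1) :
    IsStaircase (-1) 1 (fun i j => c (i, j)) ↔
      ∀ x ∈ Ico (0 : ℝ) 1, IsStaircase (-1) 1 (fun i j => cutoff c x (i, j)) := by
  have hle p : c p ≤ 1 := (abs_le.1 (hc p)).2
  have hge p : -1 ≤ c p := (abs_le.1 (hc p)).1
  have hbelow i i' j := ne_one_imp_eq_neg_one_iff (hle (i, j)) (hge (i', j))
  have hright i j j' := ne_one_imp_eq_neg_one_iff (a := -c (i, j)) (b := -c (i, j'))
    (by linarith [hge (i, j)]) (by linarith [hle (i, j')])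
  simp only [ne_eq, neg_eq_iff_eq_neg, neg_neg] at hright
  constructor
  · refine fun h x hx => ⟨fun i i' j hi => ?_, fun i j j' hj => ?_⟩
    · rw [ne_eq, cutoff_eq_one_iff hx.1, cutoff_eq_neg_one_iff hx.1]
      exact (hbelow i i' j).1 (h.below hi) x hx
    · rw [ne_eq, cutoff_eq_one_iff hx.1, cutoff_eq_neg_one_iff hx.1]
      exact (hright i j j').1 (h.right hj) x hx
  · refine fun h => ⟨fun i i' j hi => (hbelow i i' j).2 fun x hx => ?_,
      fun i j j' hj => (hright i j j').2 fun x hx => ?_⟩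
    · rw [← cutoff_eq_one_iff hx.1, ← cutoff_eq_neg_one_iff hx.1]
      exact (h x hx).below hi
    · rw [← cutoff_eq_neg_one_iff (c := c) hx.1, ← cutoff_eq_one_iff (c := c) hx.1]
      exact (h x hx).right hj

theorem XWord.isSignRepresentation_sign (l r : ℕ) :
    IsSignRepresentation (XWord.sign : XWord l r → Fin l × Fin r → SignType) :=
  fun _ _ => XWord.le_iff_sign

theorem mem_cutoffSpace_xwordSign_iff {l r : ℕ} {c : Fin l × Fin r → ℝ} :
    c ∈ cutoffSpace (XWord.sign : XWord l r → Fin l × Fin r → SignType) ↔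
      (∀ p, |c p| ≤ 1) ∧ IsStaircase (-1) 1 (fun i j => c (i, j)) := by
  simp only [cutoffSpace, mem_ofPred_eq, XWord.exists_sign_eq_iff]
  exact and_congr_right fun hc => (isStaircase_iff_cutoff hc).symm

theorem nonempty_PosetRealization_XWord_homeomorph (l r : ℕ) :
    Nonempty (PosetRealization (XWord l r) ≃ₜ
      {c : Fin l × Fin r → ℝ | (∀ p, |c p| ≤ 1) ∧ IsStaircase (-1) 1 (fun i j => c (i, j))}) := by
  have hσ := XWord.isSignRepresentation_sign l r
  have := Finite.of_injective _ hσ.injective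
  obtain ⟨e⟩ := nonempty_PosetRealization_homeomorph_cutoffSpace hσ
  exact ⟨e.trans (Homeomorph.setCongr (ext fun _ => mem_cutoffSpace_xwordSign_iff))⟩

end CutoffSpace

/-! ### Degenerating configurations -/

section Degeneration

open Filter Topology

/-- A system of pairwise compatible brackets in `{0, …, N}` containing the full interval; the
brackets are the internal vertices of a tree with leaves `0, …, N`, including its root. -/
structure IsBracketSystem (N : ℕ) (S : Finset (ℕ × ℕ)) : Prop where
  lt : ∀ b ∈ S, b.1 < b.2
  le : ∀ b ∈ S, b.2 ≤ N
  root : (0, N) ∈ S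
  compat : ∀ b ∈ S, ∀ c ∈ S,
    b.2 < c.1 ∨ c.2 < b.1 ∨ (c.1 ≤ b.1 ∧ b.2 ≤ c.2) ∨ (b.1 ≤ c.1 ∧ c.2 ≤ b.2)

/-- The bracket `c` is the nadir of the leaves `i` and `k`: the smallest bracket of `S`
containing both. -/
structure IsNadir (S : Finset (ℕ × ℕ)) (i k : ℕ) (c : ℕ × ℕ) : Prop where
  mem : c ∈ S
  left_le : c.1 ≤ i
  le_right : k ≤ c.2
  least : ∀ d ∈ S, d.1 ≤ i → k ≤ d.2 → d.1 ≤ c.1 ∧ c.2 ≤ d.2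

/-- The leaves `i` and `j` are closer to each other than to `k`: some bracket contains `i` and `j`
but not `k`. -/
def Closer (S : Finset (ℕ × ℕ)) (i j k : ℕ) : Prop :=
  ∃ b ∈ S, (b.1 ≤ i ∧ i ≤ b.2) ∧ (b.1 ≤ j ∧ j ≤ b.2) ∧ ¬(b.1 ≤ k ∧ k ≤ b.2)

/-- The array `X` of limit ratios lies in the open stratum described by `S`. -/
structure IsStratumPoint (N : ℕ) (S : Finset (ℕ × ℕ)) (X : ℕ → ℕ → ℕ → ℝ) : Prop where
  nonneg : ∀ {i j k}, i < j → j < k → k ≤ N → 0 ≤ X i j k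
  le_one : ∀ {i j k}, i < j → j < k → k ≤ N → X i j k ≤ 1
  zero_iff : ∀ {i j k}, i < j → j < k → k ≤ N → (X i j k = 0 ↔ Closer S i j k)
  one_iff : ∀ {i j k}, i < j → j < k → k ≤ N → (X i j k = 1 ↔ Closer S j k i)

/-- Along the filter `G`, the configurations `0 = τ s 0 < ⋯ < τ s N = 1` converge to the array of
ratios `X`. -/
structure TendsToRatios {ι : Type*} (N : ℕ) (X : ℕ → ℕ → ℕ → ℝ) (G : Filter ι)
    (τ : ι → ℕ → ℝ) : Prop where
  zero : ∀ᶠ s in G, τ s 0 = 0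
  one : ∀ᶠ s in G, τ s N = 1
  lt : ∀ᶠ s in G, ∀ i k, i < k → k ≤ N → τ s i < τ s k
  lim : ∀ {i j k}, i < j → j < k → k ≤ N →
    Tendsto (fun s => (τ s j - τ s i) / (τ s k - τ s i)) G (𝓝 (X i j k))

variable {ι : Type*} {N : ℕ} {S : Finset (ℕ × ℕ)} {X : ℕ → ℕ → ℕ → ℝ} {G : Filter ι}
  {τ : ι → ℕ → ℝ}

theorem IsBracketSystem.exists_isNadir (hS : IsBracketSystem N S) {i k : ℕ} (hik : i < k)
    (hk : k ≤ N) : ∃ c, IsNadir S i k c := by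
  obtain ⟨c, hc, hmin⟩ := Finset.exists_min_image {c ∈ S | c.1 ≤ i ∧ k ≤ c.2}
    (fun c : ℕ × ℕ => c.2 - c.1) ⟨(0, N), Finset.mem_filter.2 ⟨hS.root, Nat.zero_le _, hk⟩⟩
  obtain ⟨hcS, hci, hkc⟩ := Finset.mem_filter.1 hc
  refine ⟨c, hcS, hci, hkc, fun d hd hdi hkd => ?_⟩
  have := hmin d (Finset.mem_filter.2 ⟨hd, hdi, hkd⟩)
  have := hS.compat c hcS d hd
  omega

namespace TendsToRatios

theorem le (h : TendsToRatios N X G τ) :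
    ∀ᶠ s in G, ∀ i k, i ≤ k → k ≤ N → τ s i ≤ τ s k := by
  filter_upwards [h.lt] with s hs i k hik hk
  rcases hik.eq_or_lt with rfl | hik
  · exact le_rfl
  · exact (hs i k hik hk).le

theorem lim_one_sub (h : TendsToRatios N X G τ) {i j k : ℕ} (hij : i < j) (hjk : j < k)
    (hk : k ≤ N) :
    Tendsto (fun s => (τ s k - τ s j) / (τ s k - τ s i)) G (𝓝 (1 - X i j k)) := by
  refine (tendsto_const_nhds.sub (h.lim hij hjk hk)).congr' ?_
  filter_upwards [h.lt] with s hs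
  have := hs i k (hij.trans hjk) hk
  rw [eq_div_iff (by linarith), sub_mul, div_mul_cancel₀ _ (by linarith)]
  ring

theorem tendsto_sub_div_self (h : TendsToRatios N X G τ) {i k : ℕ} (hik : i < k) (hk : k ≤ N) :
    Tendsto (fun s => (τ s k - τ s i) / (τ s k - τ s i)) G (𝓝 1) := by
  refine tendsto_const_nhds.congr' ?_
  filter_upwards [h.lt] with s hs
  rw [div_self (sub_pos.2 (hs i k hik hk)).ne']

variable (hS : IsBracketSystem N S) (hX : IsStratumPoint N S X)
include hS hX

theorem exists_pos_tendsto_div_nadir (h : TendsToRatios N X G τ) {i k : ℕ} (hik : i < k)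
    {c : ℕ × ℕ} (hc : IsNadir S i k c) :
    ∃ L > 0, Tendsto (fun s => (τ s k - τ s i) / (τ s c.2 - τ s c.1)) G (𝓝 L) := by
  have hcN := hS.le c hc.mem
  obtain ⟨hci, hkc⟩ := And.intro hc.left_le hc.le_right
  obtain ⟨L₁, hL₁, h₁⟩ : ∃ L > 0,
      Tendsto (fun s => (τ s k - τ s i) / (τ s c.2 - τ s i)) G (𝓝 L) := by
    rcases hkc.eq_or_lt with hkc | hkc
    · exact ⟨1, one_pos, hkc ▸ h.tendsto_sub_div_self hik (hkc ▸ hcN)⟩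
    · refine ⟨X i k c.2, (hX.nonneg hik hkc hcN).lt_of_ne' fun h0 => ?_, h.lim hik hkc hcN⟩
      obtain ⟨d, hd, hdi, hdk, hdc⟩ := (hX.zero_iff hik hkc hcN).1 h0
      have := hc.least d hd hdi.1 hdk.2
      omega
  obtain ⟨L₂, hL₂, h₂⟩ : ∃ L > 0,
      Tendsto (fun s => (τ s c.2 - τ s i) / (τ s c.2 - τ s c.1)) G (𝓝 L) := by
    rcases hci.eq_or_lt with hci | hci
    · exact ⟨1, one_pos, hci ▸ h.tendsto_sub_div_self (hci ▸ hik.trans_le hkc) hcN⟩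
    · have hic := hik.trans_le hkc
      refine ⟨1 - X c.1 i c.2, sub_pos.2 ((hX.le_one hci hic hcN).lt_of_ne fun h1 => ?_),
        h.lim_one_sub hci hic hcN⟩
      obtain ⟨d, hd, hdi, hdk, hdc⟩ := (hX.one_iff hci hic hcN).1 h1
      have := hc.least d hd hdi.1 (by omega)
      omega
  refine ⟨L₁ * L₂, mul_pos hL₁ hL₂, (h₁.mul h₂).congr' ?_⟩
  filter_upwards [h.lt] with s hs
  exact div_mul_div_cancel₀ (sub_pos.2 (hs i c.2 (by omega) hcN)).ne'

theorem tendsto_size_div_size (h : TendsToRatios N X G τ) {b c : ℕ × ℕ} (hb : b ∈ S) (hc : c ∈ S)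
    (h₁ : c.1 ≤ b.1) (h₂ : b.2 ≤ c.2) (hbc : b ≠ c) :
    Tendsto (fun s => (τ s b.2 - τ s b.1) / (τ s c.2 - τ s c.1)) G (𝓝 0) := by
  have hlt := hS.lt b hb
  have hcN := hS.le c hc
  obtain ⟨i, k, hi, hib, hkb, hk, h0⟩ : ∃ i k, c.1 ≤ i ∧ i ≤ b.1 ∧ b.2 ≤ k ∧ k ≤ c.2 ∧
      Tendsto (fun s => (τ s b.2 - τ s b.1) / (τ s k - τ s i)) G (𝓝 0) := by
    rcases h₂.lt_or_eq with h₂ | h₂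
    · refine ⟨b.1, c.2, h₁, le_rfl, h₂.le, le_rfl, ?_⟩
      exact (hX.zero_iff hlt h₂ hcN).2 ⟨b, hb, by omega⟩ ▸ h.lim hlt h₂ hcN
    · have h₁ := h₁.lt_of_ne' fun he => hbc (Prod.ext he h₂)
      refine ⟨c.1, b.2, le_rfl, h₁.le, le_rfl, h₂.le, ?_⟩
      have := h.lim_one_sub h₁ hlt (hS.le b hb)
      rwa [(hX.one_iff h₁ hlt (hS.le b hb)).2 ⟨b, hb, by omega⟩, sub_self] at this
  refine squeeze_zero' ?_ ?_ h0
  · filter_upwards [h.lt] with s hs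
    exact div_nonneg (sub_pos.2 (hs _ _ hlt (hS.le b hb))).le
      (sub_pos.2 (hs _ _ (hS.lt c hc) hcN)).le
  · filter_upwards [h.lt, h.le] with s hs hs'
    have := hs i k (by omega) (by omega)
    have := hs' c.1 i hi (by omega)
    have := hs' k c.2 hk (by omega)
    exact div_le_div_of_nonneg_left (sub_pos.2 (hs _ _ hlt (hS.le b hb))).le (by linarith)
      (by linarith)

end TendsToRatios

theorem tendsto_sub_div_of_gaps {κ : Type*} {H : Filter κ} {β : Type*} [DecidableEq β]
    {D : β → κ → ℝ} {t : κ → ℕ → ℝ} {ν : ℕ → β} {L : ℕ → ℝ} {c : β} {i k : ℕ} (hik : i ≤ k)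
    (hgap : ∀ e ∈ Finset.Ico i k, Tendsto (fun s => (t s (e + 1) - t s e) / D (ν e) s) H (𝓝 (L e)))
    (hne : ∀ e ∈ Finset.Ico i k, ∀ᶠ s in H, D (ν e) s ≠ 0)
    (hsmall : ∀ e ∈ Finset.Ico i k, ν e ≠ c → Tendsto (fun s => D (ν e) s / D c s) H (𝓝 0)) :
    Tendsto (fun s => (t s k - t s i) / D c s) H
      (𝓝 (∑ e ∈ Finset.Ico i k, if ν e = c then L e else 0)) := by
  simp only [← Finset.sum_Ico_sub (t _) hik, Finset.sum_div]
  refine tendsto_finsetSum _ fun e he => ?_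
  split_ifs with hc
  · exact hc ▸ hgap e he
  · have := (hgap e he).mul (hsmall e he hc)
    rw [mul_zero] at this
    refine this.congr' ?_
    filter_upwards [hne e he] with s hs
    exact div_mul_div_cancel₀ hs

/-- Configurations `t` whose sizes are measured by the scales `Λ` have the same asymptotic shape,
inside each bracket of `S`, as configurations `τ` measured by their own bracket sizes. -/
def SameShape {κ : Type*} (S : Finset (ℕ × ℕ)) (G : Filter ι) (τ : ι → ℕ → ℝ) (H : Filter κ)
    (t : κ → ℕ → ℝ) (Λ : ℕ × ℕ → κ → ℝ) : Prop :=
  ∀ c ∈ S, ∀ i k, c.1 ≤ i → i ≤ k → k ≤ c.2 → ∃ M,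
    Tendsto (fun s => (τ s k - τ s i) / (τ s c.2 - τ s c.1)) G (𝓝 M) ∧
      Tendsto (fun s => (t s k - t s i) / Λ c s) H (𝓝 M)

theorem TendsToRatios.tendsto_size_div_scale [G.NeBot] {κ : Type*} {H : Filter κ}
    {Λ : ℕ × ℕ → κ → ℝ} {t : κ → ℕ → ℝ} (hS : IsBracketSystem N S) (h : TendsToRatios N X G τ)
    (ht : SameShape S G τ H t Λ) {b : ℕ × ℕ} (hb : b ∈ S) :
    Tendsto (fun s => (t s b.2 - t s b.1) / Λ b s) H (𝓝 1) := by
  obtain ⟨M, hM, hM'⟩ := ht b hb b.1 b.2 le_rfl (hS.lt b hb).le le_rfl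
  rwa [tendsto_nhds_unique hM (h.tendsto_sub_div_self (hS.lt b hb) (hS.le b hb))] at hM'

section

variable {κ : Type*} {H : Filter κ} {Λ : ℕ × ℕ → κ → ℝ} {t : κ → ℕ → ℝ}
  (hS : IsBracketSystem N S) (hX : IsStratumPoint N S X) (h : TendsToRatios N X G τ)
include hS hX h

theorem TendsToRatios.exists_gap_limits : ∃ (ν : ℕ → ℕ × ℕ) (L : ℕ → ℝ), ∀ e < N,
    IsNadir S e (e + 1) (ν e) ∧ 0 < L e ∧
      Tendsto (fun s => (τ s (e + 1) - τ s e) / (τ s (ν e).2 - τ s (ν e).1)) G (𝓝 (L e)) := by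
  have hgap e : ∃ ν L, e < N → IsNadir S e (e + 1) ν ∧ 0 < L ∧
      Tendsto (fun s => (τ s (e + 1) - τ s e) / (τ s ν.2 - τ s ν.1)) G (𝓝 L) := by
    by_cases he : e < N
    · obtain ⟨ν, hν⟩ := hS.exists_isNadir e.lt_succ_self he
      obtain ⟨L, hL⟩ := h.exists_pos_tendsto_div_nadir hS hX e.lt_succ_self hν
      exact ⟨ν, L, fun _ => ⟨hν, hL⟩⟩
    · exact ⟨0, 0, fun h => absurd h he⟩
  choose ν L hνL using hgap
  exact ⟨ν, L, hνL⟩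

variable (hpos : ∀ b ∈ S, ∀ᶠ s in H, 0 < Λ b s)
include hpos

section

variable (hΛ : ∀ b ∈ S, ∀ c ∈ S, c.1 ≤ b.1 → b.2 ≤ c.2 → b ≠ c →
  Tendsto (fun s => Λ b s / Λ c s) H (𝓝 0))
include hΛ

theorem TendsToRatios.sameShape_of_gaps {ν : ℕ → ℕ × ℕ} {L : ℕ → ℝ}
    (hν : ∀ e < N, IsNadir S e (e + 1) (ν e))
    (hτ : ∀ e < N,
      Tendsto (fun s => (τ s (e + 1) - τ s e) / (τ s (ν e).2 - τ s (ν e).1)) G (𝓝 (L e)))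
    (ht : ∀ e < N, Tendsto (fun s => (t s (e + 1) - t s e) / Λ (ν e) s) H (𝓝 (L e))) :
    SameShape S G τ H t Λ := by
  intro c hc i k hci hik hkc
  have hlt {e : ℕ} (he : e ∈ Finset.Ico i k) : e < N :=
    (Finset.mem_Ico.1 he).2.trans_le (hkc.trans (hS.le c hc))
  have hmem {e : ℕ} (he : e ∈ Finset.Ico i k) : ν e ∈ S := (hν e (hlt he)).mem
  have hsub {e : ℕ} (he : e ∈ Finset.Ico i k) : c.1 ≤ (ν e).1 ∧ (ν e).2 ≤ c.2 := by
    obtain ⟨h₁, h₂⟩ := Finset.mem_Ico.1 he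
    exact (hν e (hlt he)).least c hc (hci.trans h₁) (Nat.succ_le_of_lt h₂ |>.trans hkc)
  let D (b : ℕ × ℕ) (s : ι) : ℝ := τ s b.2 - τ s b.1
  have hD b (hb : b ∈ S) : ∀ᶠ s in G, D b s ≠ 0 := by
    filter_upwards [h.lt] with s hs
    exact (sub_pos.2 (hs _ _ (hS.lt _ hb) (hS.le _ hb))).ne'
  exact ⟨_, tendsto_sub_div_of_gaps (D := D) hik (fun e he => hτ e (hlt he))
      (fun e he => hD _ (hmem he))
      fun e he => h.tendsto_size_div_size hS hX (hmem he) hc (hsub he).1 (hsub he).2,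
    tendsto_sub_div_of_gaps hik (fun e he => ht e (hlt he))
      (fun e he => (hpos _ (hmem he)).mono fun s hs => hs.ne')
      fun e he => hΛ _ (hmem he) c hc (hsub he).1 (hsub he).2⟩

theorem TendsToRatios.exists_sameShape :
    ∃ t : κ → ℕ → ℝ, (∀ᶠ s in H, ∀ e < N, t s e < t s (e + 1)) ∧ SameShape S G τ H t Λ := by
  obtain ⟨ν, L, hνL⟩ := h.exists_gap_limits hS hX
  refine ⟨fun s j => ∑ e ∈ Finset.range j, L e * Λ (ν e) s, ?_,
    h.sameShape_of_gaps hS hX hpos hΛ (fun e he => (hνL e he).1) (fun e he => (hνL e he).2.2)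
      fun e he => ?_⟩
  · refine (Set.finite_Iio N).eventually_all.2 fun e he => ?_
    filter_upwards [hpos _ (hνL e he).1.mem] with s hs
    simpa [Finset.sum_range_succ] using mul_pos (hνL e he).2.1 hs
  · refine tendsto_const_nhds.congr' ?_
    filter_upwards [hpos _ (hνL e he).1.mem] with s hs
    rw [Finset.sum_range_succ, add_sub_cancel_left, mul_div_cancel_right₀ _ hs.ne']

end

variable [G.NeBot]

theorem TendsToRatios.tendsto_ratio_of_sameShape (ht : SameShape S G τ H t Λ)
    {i j k : ℕ} (hij : i < j) (hjk : j < k) (hk : k ≤ N) :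
    Tendsto (fun s => (t s j - t s i) / (t s k - t s i)) H (𝓝 (X i j k)) := by
  have hik := hij.trans hjk
  obtain ⟨c, hc⟩ := hS.exists_isNadir hik hk
  obtain ⟨L, hL0, hL⟩ := h.exists_pos_tendsto_div_nadir hS hX hik hc
  obtain ⟨M, hM, hM'⟩ := ht c hc.mem i j hc.left_le hij.le (hjk.le.trans hc.le_right)
  obtain ⟨L', hL', hL''⟩ := ht c hc.mem i k hc.left_le hik.le hc.le_right
  obtain rfl := tendsto_nhds_unique hL hL'
  have hdiv : X i j k = M / L := by
    refine tendsto_nhds_unique (h.lim hij hjk hk) ((hM.div hL hL0.ne').congr' ?_)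
    filter_upwards [h.lt] with s hs
    exact div_div_div_cancel_right₀
      (sub_pos.2 (hs _ _ (hS.lt c hc.mem) (hS.le c hc.mem))).ne' _ _
  rw [hdiv]
  refine (hM'.div hL'' hL0.ne').congr' ?_
  filter_upwards [hpos c hc.mem] with s hs
  exact div_div_div_cancel_right₀ hs.ne' _ _

theorem TendsToRatios.exists_of_scales (hroot : ∀ s, Λ (0, N) s = 1)
    (hΛ : ∀ b ∈ S, ∀ c ∈ S, c.1 ≤ b.1 → b.2 ≤ c.2 → b ≠ c →
      Tendsto (fun s => Λ b s / Λ c s) H (𝓝 0)) :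
    ∃ τ' : κ → ℕ → ℝ, TendsToRatios N X H τ' ∧
      ∀ b ∈ S, Tendsto (fun s => (τ' s b.2 - τ' s b.1) / Λ b s) H (𝓝 1) := by
  obtain ⟨t, hmono, ht⟩ := h.exists_sameShape hS hX hpos hΛ
  have htotal : Tendsto (fun s => t s N - t s 0) H (𝓝 1) := by
    simpa [hroot] using h.tendsto_size_div_scale hS ht hS.root
  have htotal0 : ∀ᶠ s in H, 0 < t s N - t s 0 := htotal.eventually_const_lt one_pos
  have hlt : ∀ᶠ s in H, ∀ i k, i < k → k ≤ N → t s i < t s k := by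
    filter_upwards [hmono] with s hs i k hik hk
    exact strictMonoOn_of_lt_succ Set.ordConnected_Iic
      (fun e _ _ he => hs e (Order.succ_le_iff.1 he)) (Set.mem_Iic.2 (hik.le.trans hk))
      (Set.mem_Iic.2 hk) hik
  have hdiff s i k : (t s k - t s 0) / (t s N - t s 0) - (t s i - t s 0) / (t s N - t s 0) =
      (t s k - t s i) / (t s N - t s 0) := by
    rw [← sub_div, sub_sub_sub_cancel_right]
  refine ⟨fun s j => (t s j - t s 0) / (t s N - t s 0), ⟨?_, ?_, ?_, fun hij hjk hk => ?_⟩,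
    fun b hb => ?_⟩
  · simp
  · filter_upwards [htotal0] with s hs
    exact div_self hs.ne'
  · filter_upwards [hlt, htotal0] with s hs hs0 i k hik hk
    rw [div_lt_div_iff_of_pos_right hs0]
    linarith [hs i k hik hk]
  · refine (h.tendsto_ratio_of_sameShape hS hX hpos ht hij hjk hk).congr' ?_
    filter_upwards [htotal0] with s hs0
    rw [hdiff, hdiff, div_div_div_cancel_right₀ hs0.ne']
  · simp only [hdiff, div_right_comm _ (t _ N - t _ 0)]
    exact div_one (1 : ℝ) ▸ (h.tendsto_size_div_scale hS ht hb).div htotal one_ne_zero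

end

end Degeneration

/-! ### Limits of ratios -/

section RatioLimits

open Filter Topology Real Asymptotics

variable {ι : Type*} {G : Filter ι} {u v w u' v' : ι → ℝ} {L : ℝ≥0∞}

/-- The ratio `u / v`, computed in `[0, ∞]`, tends to `L`. -/
def RatioTendsto (G : Filter ι) (u v : ι → ℝ) (L : ℝ≥0∞) : Prop :=
  Tendsto (fun s => ENNReal.ofReal (u s) / ENNReal.ofReal (v s)) G (𝓝 L)

/-- The ratio `u / v` has a limit in `[0, ∞]`. -/
def HasRatioLim (G : Filter ι) (u v : ι → ℝ) : Prop := ∃ L, RatioTendsto G u v L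

theorem RatioTendsto.congr (h : RatioTendsto G u v L) (hu : u =ᶠ[G] u') (hv : v =ᶠ[G] v') :
    RatioTendsto G u' v' L :=
  Tendsto.congr' (by filter_upwards [hu, hv] with s hu hv using by rw [hu, hv]) h

theorem HasRatioLim.congr (h : HasRatioLim G u v) (hu : u =ᶠ[G] u') (hv : v =ᶠ[G] v') :
    HasRatioLim G u' v' :=
  h.imp fun _ hL => hL.congr hu hv

theorem RatioTendsto.symm (h : RatioTendsto G u v L) (hv : ∀ᶠ s in G, 0 < v s) :
    RatioTendsto G v u L⁻¹ := by
  refine Tendsto.congr' ?_ (Filter.Tendsto.inv h)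
  filter_upwards [hv] with s hv
  exact ENNReal.inv_div (.inl ENNReal.ofReal_ne_top) (.inl (ENNReal.ofReal_pos.2 hv).ne')

theorem RatioTendsto.zero_trans (huv : RatioTendsto G u v 0) (hvw : RatioTendsto G v w L)
    (hL : L ≠ ⊤) (hv : ∀ᶠ s in G, 0 < v s) : RatioTendsto G u w 0 := by
  have := ENNReal.Tendsto.mul huv (.inr hL) hvw (.inr ENNReal.zero_ne_top)
  rw [zero_mul] at this
  refine Tendsto.congr' ?_ this
  filter_upwards [hv] with s hv
  rw [← mul_div_assoc,
    ENNReal.div_mul_cancel (ENNReal.ofReal_pos.2 hv).ne' ENNReal.ofReal_ne_top]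

theorem HasRatioLim.symm (h : HasRatioLim G u v) (hv : ∀ᶠ s in G, 0 < v s) : HasRatioLim G v u :=
  h.elim fun _ hL => ⟨_, hL.symm hv⟩

theorem ratioTendsto_of_tendsto {a b : ℝ} (hu : Tendsto u G (𝓝 a)) (hv : Tendsto v G (𝓝 b))
    (hab : 0 < a ∨ 0 < b) : RatioTendsto G u v (ENNReal.ofReal a / ENNReal.ofReal b) :=
  ENNReal.Tendsto.div (ENNReal.tendsto_ofReal hu)
    (hab.imp (fun h => (ENNReal.ofReal_pos.2 h).ne') fun h => (ENNReal.ofReal_pos.2 h).ne')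
    (ENNReal.tendsto_ofReal hv) (.inl ENNReal.ofReal_ne_top)

theorem ratioTendsto_of_tendsto_div {a : ℝ} (h : Tendsto (fun s => u s / v s) G (𝓝 a))
    (hv : ∀ᶠ s in G, 0 < v s) : RatioTendsto G u v (ENNReal.ofReal a) := by
  refine Tendsto.congr' ?_ (ENNReal.tendsto_ofReal h)
  filter_upwards [hv] with s hv
  exact ENNReal.ofReal_div_of_pos hv

theorem RatioTendsto.mul {g h : ι → ℝ} {a b : ℝ} (huv : RatioTendsto G u v L)
    (hg : Tendsto g G (𝓝 a)) (ha : 0 < a) (hh : Tendsto h G (𝓝 b)) (hb : 0 < b) :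
    RatioTendsto G (fun s => u s * g s) (fun s => v s * h s)
      (L * (ENNReal.ofReal a / ENNReal.ofReal b)) := by
  have hne : ENNReal.ofReal a / ENNReal.ofReal b ≠ 0 :=
    (ENNReal.div_pos (ENNReal.ofReal_pos.2 ha).ne' ENNReal.ofReal_ne_top).ne'
  have hnt : ENNReal.ofReal a / ENNReal.ofReal b ≠ ⊤ :=
    ENNReal.div_ne_top ENNReal.ofReal_ne_top (ENNReal.ofReal_pos.2 hb).ne'
  refine Tendsto.congr' ?_
    (ENNReal.Tendsto.mul huv (.inr hnt) (ratioTendsto_of_tendsto hg hh (.inl ha)) (.inl hne))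
  filter_upwards [hg.eventually_const_le ha, hh.eventually_const_le hb] with s hg hh
  rw [ENNReal.ofReal_mul' hg, ENNReal.ofReal_mul' hh,
    ENNReal.mul_div_mul_comm (.inr ENNReal.ofReal_ne_top) (.inl ENNReal.ofReal_ne_top)]

theorem RatioTendsto.congr_isEquivalent (h : RatioTendsto G u v L) (hu : u' ~[G] u)
    (hv : v' ~[G] v) : RatioTendsto G u' v' L := by
  obtain ⟨φ, hφ, hu⟩ := hu.exists_eq_mul
  obtain ⟨ψ, hψ, hv⟩ := hv.exists_eq_mul
  have := h.mul hφ one_pos hψ one_pos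
  rw [ENNReal.ofReal_one, div_one, mul_one] at this
  exact this.congr (hu.mono fun s hs => hs.symm ▸ mul_comm _ _)
    (hv.mono fun s hs => hs.symm ▸ mul_comm _ _)

theorem ratioTendsto_iff_of_isEquivalent (hu : u' ~[G] u) (hv : v' ~[G] v) :
    RatioTendsto G u' v' L ↔ RatioTendsto G u v L :=
  ⟨fun h => h.congr_isEquivalent hu.symm hv.symm, fun h => h.congr_isEquivalent hu hv⟩

theorem ratioTendsto_const_mul_iff {c : ℝ} (hc : 0 < c) :
    RatioTendsto G (fun s => c * u s) (fun s => c * v s) L ↔ RatioTendsto G u v L := by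
  simp only [RatioTendsto, ENNReal.ofReal_mul hc.le,
    ENNReal.mul_div_mul_left _ _ (ENNReal.ofReal_pos.2 hc).ne' ENNReal.ofReal_ne_top]

theorem HasRatioLim.add_self (h : HasRatioLim G w v) (hv : ∀ᶠ s in G, 0 < v s)
    (hw : ∀ᶠ s in G, 0 < w s) : HasRatioLim G (fun s => v s + w s) v := by
  obtain ⟨L, hL⟩ := h
  refine ⟨1 + L, Tendsto.congr' ?_ (tendsto_const_nhds.add hL)⟩
  filter_upwards [hv, hw] with s hv hw
  rw [ENNReal.ofReal_add hv.le hw.le, ENNReal.add_div,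
    ENNReal.div_self (ENNReal.ofReal_pos.2 hv).ne' ENNReal.ofReal_ne_top]

theorem hasRatioLim_of_eventuallyEq_zero (hu : u =ᶠ[G] 0) : HasRatioLim G u v := by
  refine ⟨0, tendsto_const_nhds.congr' ?_⟩
  filter_upwards [hu] with s hu
  rw [hu, Pi.zero_apply, ENNReal.ofReal_zero, ENNReal.zero_div]

/-- If `v / u` has a finite limit, then `(v + w) / u = v / u + w / (u + v) * (1 + v / u)`. -/
theorem HasRatioLim.add_of_total (hvu : HasRatioLim G v u)
    (hw_uv : HasRatioLim G w (fun s => u s + v s)) (hu : ∀ᶠ s in G, 0 < u s)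
    (hv : ∀ᶠ s in G, 0 ≤ v s) (hw : ∀ᶠ s in G, 0 ≤ w s) :
    HasRatioLim G (fun s => v s + w s) u := by
  obtain ⟨L, hL⟩ := hvu
  obtain ⟨M, hM⟩ := hw_uv
  rcases eq_or_ne L ⊤ with rfl | hLt
  · refine ⟨⊤, tendsto_nhds_top_mono hL ?_⟩
    filter_upwards [hw] with s hw
    exact ENNReal.div_le_div_right (ENNReal.ofReal_le_ofReal (le_add_of_nonneg_right hw)) _
  have hprod := ENNReal.Tendsto.mul hM (.inr (ENNReal.add_ne_top.2 ⟨ENNReal.one_ne_top, hLt⟩))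
    (tendsto_const_nhds.add hL) (.inl (add_pos_of_pos_of_nonneg one_pos zero_le).ne')
  refine ⟨L + M * (1 + L), Tendsto.congr' ?_ (Filter.Tendsto.add hL hprod)⟩
  filter_upwards [hu, hv, hw] with s hu hv hw
  have hne := (ENNReal.ofReal_pos.2 hu).ne'
  have hne' := (ENNReal.ofReal_pos.2 (add_pos_of_pos_of_nonneg hu hv)).ne'
  rw [ENNReal.ofReal_add hv hw, ENNReal.add_div, ← ENNReal.div_self hne ENNReal.ofReal_ne_top,
    ← ENNReal.add_div, ← ENNReal.ofReal_add hu.le hv, ← mul_div_assoc,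
    ENNReal.div_mul_cancel hne' ENNReal.ofReal_ne_top]

theorem ratioTendsto_sin_iff (hu : Tendsto u G (𝓝 0)) (hv : Tendsto v G (𝓝 0)) :
    RatioTendsto G (fun s => sin (π * u s)) (fun s => sin (π * v s)) L ↔
      RatioTendsto G u v L := by
  have hsin {u : ι → ℝ} (hu : Tendsto u G (𝓝 0)) :
      (fun s => sin (π * u s)) ~[G] fun s => π * u s :=
    isEquivalent_sin.comp_tendsto (by simpa only [mul_zero] using hu.const_mul π)
  rw [ratioTendsto_iff_of_isEquivalent (hsin hu) (hsin hv), ratioTendsto_const_mul_iff pi_pos]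

theorem sin_pi_mul_pos {a : ℝ} (h0 : 0 < a) (h1 : a < 1) : 0 < sin (π * a) :=
  sin_pos_of_pos_of_lt_pi (mul_pos pi_pos h0) (mul_lt_of_lt_one_right pi_pos h1)

theorem sin_pi_mul_one_sub (a : ℝ) : sin (π * (1 - a)) = sin (π * a) := by
  rw [mul_sub, mul_one, sin_pi_sub]

theorem hasRatioLim_sin_of_tendsto_zero (hv : Tendsto v G (𝓝 0)) (hw : Tendsto w G (𝓝 0))
    (hv0 : ∀ᶠ s in G, 0 < v s) (hw0 : ∀ᶠ s in G, 0 < w s)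
    (hsum : ∀ᶠ s in G, u s + v s + w s = 1) (hwv : HasRatioLim G w v) :
    HasRatioLim G (fun s => sin (π * u s)) (fun s => sin (π * v s)) := by
  obtain ⟨L, hL⟩ := hwv.add_self hv0 hw0
  have hvw : Tendsto (fun s => v s + w s) G (𝓝 0) := add_zero (0 : ℝ) ▸ hv.add hw
  refine ⟨L, ((ratioTendsto_sin_iff hvw hv).2 hL).congr ?_ .rfl⟩
  filter_upwards [hsum] with s hs
  rw [← sin_pi_mul_one_sub (u s), show 1 - u s = v s + w s by linarith]

theorem hasRatioLim_sin [G.NeBot] (hu : ∃ a, Tendsto u G (𝓝 a)) (hv : ∃ b, Tendsto v G (𝓝 b))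
    (hu0 : ∀ᶠ s in G, 0 < u s) (hv0 : ∀ᶠ s in G, 0 < v s) (hw0 : ∀ᶠ s in G, 0 < w s)
    (hsum : ∀ᶠ s in G, u s + v s + w s = 1) (huv : HasRatioLim G u v) (hwv : HasRatioLim G w v)
    (hwu : HasRatioLim G w u) :
    HasRatioLim G (fun s => sin (π * u s)) (fun s => sin (π * v s)) := by
  obtain ⟨⟨a, hu⟩, b, hv⟩ := And.intro hu hv
  have hw : Tendsto w G (𝓝 (1 - a - b)) :=
    ((hu.const_sub 1).sub hv).congr' (hsum.mono fun s hs => by linarith)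
  have ha : 0 ≤ a := ge_of_tendsto hu (hu0.mono fun _ => le_of_lt)
  have hb : 0 ≤ b := ge_of_tendsto hv (hv0.mono fun _ => le_of_lt)
  have hc : 0 ≤ 1 - a - b := ge_of_tendsto hw (hw0.mono fun _ => le_of_lt)
  have hsin {u : ι → ℝ} {a : ℝ} (hu : Tendsto u G (𝓝 a)) :
      Tendsto (fun s => sin (π * u s)) G (𝓝 (sin (π * a))) :=
    (continuous_sin.tendsto _).comp (hu.const_mul π)
  by_cases hpos : 0 < sin (π * a) ∨ 0 < sin (π * b)
  · exact ⟨_, ratioTendsto_of_tendsto (hsin hu) (hsin hv) hpos⟩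
  have eq_zero_or_one {a : ℝ} (h0 : 0 ≤ a) (h1 : a ≤ 1) (hs : ¬0 < sin (π * a)) :
      a = 0 ∨ a = 1 := by
    contrapose! hs
    exact sin_pi_mul_pos (h0.lt_of_ne' hs.1) (h1.lt_of_ne hs.2)
  rw [not_or] at hpos
  rcases eq_zero_or_one ha (by linarith) hpos.1 with rfl | rfl
  · rcases eq_zero_or_one hb (by linarith) hpos.2 with rfl | rfl
    · exact huv.imp fun L => (ratioTendsto_sin_iff hu hv).2
    · rw [sub_zero, sub_self] at hw
      refine (hasRatioLim_sin_of_tendsto_zero hu hw hu0 hw0 ?_ hwu).symm ?_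
      · exact hsum.mono fun s hs => by linarith
      · filter_upwards [hu0, hv0, hw0, hsum] with s hu hv hw hs
        exact sin_pi_mul_pos hu (by linarith)
  · obtain rfl : b = 0 := by linarith
    rw [sub_self, sub_zero] at hw
    exact hasRatioLim_sin_of_tendsto_zero hv hw hv0 hw0 hsum hwv

end RatioLimits

/-! ### Ratios of chords of the circle -/

section Chords

open Filter Topology Real

variable {ι : Type*} {N : ℕ} {S : Finset (ℕ × ℕ)} {X : ℕ → ℕ → ℕ → ℝ} {G : Filter ι}
  {τ : ι → ℕ → ℝ}

namespace TendsToRatios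

theorem mem_Icc (h : TendsToRatios N X G τ) {p : ℕ} (hp : p ≤ N) :
    ∀ᶠ s in G, τ s p ∈ Set.Icc (0 : ℝ) 1 := by
  filter_upwards [h.le, h.zero, h.one] with s hle h0 h1
  exact ⟨h0 ▸ hle 0 p p.zero_le hp, h1 ▸ hle p N hp le_rfl⟩

theorem tendsto_apply (h : TendsToRatios N X G τ) {p : ℕ} (hp : 0 < p) (hpN : p < N) :
    Tendsto (fun s => τ s p) G (𝓝 (X 0 p N)) := by
  refine (h.lim hp hpN le_rfl).congr' ?_
  filter_upwards [h.zero, h.one] with s h0 h1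
  rw [h0, h1, sub_zero, sub_zero, div_one]

theorem exists_tendsto_apply (h : TendsToRatios N X G τ) {p : ℕ} (hp : p ≤ N) :
    ∃ a, Tendsto (fun s => τ s p) G (𝓝 a) := by
  rcases p.eq_zero_or_pos with rfl | hp0
  · exact ⟨0, tendsto_const_nhds.congr' (h.zero.mono fun s => Eq.symm)⟩
  rcases hp.eq_or_lt with rfl | hpN
  · exact ⟨1, tendsto_const_nhds.congr' (h.one.mono fun s => Eq.symm)⟩
  · exact ⟨_, h.tendsto_apply hp0 hpN⟩

theorem exists_tendsto_sub (h : TendsToRatios N X G τ) {p q : ℕ} (hp : p ≤ N) (hq : q ≤ N) :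
    ∃ a, Tendsto (fun s => τ s q - τ s p) G (𝓝 a) := by
  obtain ⟨⟨a, ha⟩, b, hb⟩ := And.intro (h.exists_tendsto_apply hp) (h.exists_tendsto_apply hq)
  exact ⟨b - a, hb.sub ha⟩

theorem hasRatioLim_gaps (h : TendsToRatios N X G τ) {p q r : ℕ} (hpq : p < q) (hqr : q < r)
    (hr : r ≤ N) : HasRatioLim G (fun s => τ s q - τ s p) (fun s => τ s r - τ s q) := by
  have hpos : 0 < X p q r ∨ 0 < 1 - X p q r := by
    by_contra! hcon
    linarith
  refine ⟨_, (ratioTendsto_of_tendsto (h.lim hpq hqr hr) (h.lim_one_sub hpq hqr hr) hpos).congr'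
    ?_⟩
  filter_upwards [h.lt] with s hs
  have h0 := inv_pos.2 (sub_pos.2 (hs p r (hpq.trans hqr) hr))
  rw [div_eq_mul_inv (τ s q - _), div_eq_mul_inv (τ s r - _), ENNReal.ofReal_mul' h0.le,
    ENNReal.ofReal_mul' h0.le,
    ENNReal.mul_div_mul_right _ _ (ENNReal.ofReal_pos.2 h0).ne' ENNReal.ofReal_ne_top]

variable (hS : IsBracketSystem N S) (hX : IsStratumPoint N S X)

include hX in
theorem tendsto_left_zero (h : TendsToRatios N X G τ) {a : ℕ} (ha : (0, a) ∈ S) (ha0 : 0 < a)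
    (haN : a < N) : Tendsto (fun s => τ s a) G (𝓝 0) :=
  (hX.zero_iff ha0 haN le_rfl).2 ⟨_, ha, by omega⟩ ▸ h.tendsto_apply ha0 haN

include hX in
theorem tendsto_right_zero (h : TendsToRatios N X G τ) {b : ℕ} (hb : (b, N) ∈ S) (hb0 : 0 < b)
    (hbN : b < N) : Tendsto (fun s => 1 - τ s b) G (𝓝 0) := by
  have := (h.tendsto_apply hb0 hbN).const_sub 1
  rwa [(hX.one_iff hb0 hbN le_rfl).2 ⟨_, hb, by omega⟩, sub_self] at this

variable (h : TendsToRatios N X G τ)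
  (hcl : ∀ a b, (0, a) ∈ S → (b, N) ∈ S → 0 < a → a < b → b < N →
    HasRatioLim G (fun s => τ s a) (fun s => 1 - τ s b))
include hS hX h hcl

/-- The only ratios not controlled by `X` are those of a length at the left end to a length at
the right end; they are comparable to the sizes of the nadirs `(0, a)` and `(b, N)`. -/
theorem hasRatioLim_ends {p q : ℕ} (hpq : p < q) (hq : q < N) :
    HasRatioLim G (fun s => τ s p) (fun s => 1 - τ s q) := by
  rcases p.eq_zero_or_pos with rfl | hp
  · exact hasRatioLim_of_eventuallyEq_zero h.zero
  obtain ⟨⟨a₀, a⟩, ha⟩ := hS.exists_isNadir hp (hpq.trans hq).le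
  obtain ⟨⟨b, b₁⟩, hb⟩ := hS.exists_isNadir hq le_rfl
  obtain rfl : a₀ = 0 := Nat.le_zero.1 ha.left_le
  obtain rfl : N = b₁ := le_antisymm hb.le_right (hS.le _ hb.mem)
  obtain ⟨L₁, hL₁, h₁⟩ : ∃ L > 0, Tendsto (fun s => τ s p / τ s a) G (𝓝 L) := by
    obtain ⟨L, hL, hlim⟩ := h.exists_pos_tendsto_div_nadir hS hX hp ha
    refine ⟨L, hL, hlim.congr' ?_⟩
    filter_upwards [h.zero] with s h0 using by rw [h0, sub_zero, sub_zero]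
  obtain ⟨L₂, hL₂, h₂⟩ : ∃ L > 0, Tendsto (fun s => (1 - τ s q) / (1 - τ s b)) G (𝓝 L) := by
    obtain ⟨L, hL, hlim⟩ := h.exists_pos_tendsto_div_nadir hS hX hq hb
    refine ⟨L, hL, hlim.congr' ?_⟩
    filter_upwards [h.one] with s h1 using by rw [h1]
  obtain ⟨hpa, hbq⟩ := And.intro ha.le_right hb.left_le
  have haN := hS.le _ ha.mem
  obtain ⟨L, hL⟩ : HasRatioLim G (fun s => τ s a) (fun s => 1 - τ s b) := by
    obtain ⟨⟨x, hx⟩, y, hy⟩ :=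
      And.intro (h.exists_tendsto_apply haN) (h.exists_tendsto_apply (hbq.trans hq.le))
    rcases haN.eq_or_lt with rfl | haN
    · exact ⟨_, ratioTendsto_of_tendsto (tendsto_const_nhds.congr' (h.one.mono fun s => Eq.symm))
        (hy.const_sub 1) (.inl one_pos)⟩
    rcases b.eq_zero_or_pos with rfl | hb0
    · refine ⟨_, ratioTendsto_of_tendsto (b := 1) hx (tendsto_const_nhds.congr' ?_)
        (.inr one_pos)⟩
      exact h.zero.mono fun s h0 => by simp only [h0, sub_zero]
    · have := hS.compat _ ha.mem _ hb.mem
      exact hcl a b ha.mem hb.mem (by omega) (by omega) (by omega)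
  refine ⟨_, (hL.mul h₁ hL₁ h₂ hL₂).congr ?_ ?_⟩
  · filter_upwards [h.lt, h.zero] with s hs h0
    exact mul_div_cancel₀ _ (h0 ▸ hs 0 a (hp.trans_le hpa) haN).ne'
  · filter_upwards [h.lt, h.one] with s hs h1
    exact mul_div_cancel₀ _ (sub_pos.2 (h1 ▸ hs b N (by omega) le_rfl)).ne'

theorem hasRatioLim_outer_right {p q r : ℕ} (hpq : p < q) (hqr : q < r) (hr : r < N) :
    HasRatioLim G (fun s => 1 - τ s r + τ s p) (fun s => τ s r - τ s q) := by
  refine HasRatioLim.add_of_total ?_ ?_ ?_ ?_ ?_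
  · refine ((h.hasRatioLim_gaps hqr hr le_rfl).symm ?_).congr ?_ .rfl
    · exact h.lt.mono fun s hs => sub_pos.2 (hs r N hr le_rfl)
    · exact h.one.mono fun s h1 => by simp only [h1]
  · exact (h.hasRatioLim_ends hS hX hcl hpq (hqr.trans hr)).congr .rfl
      (.of_forall fun s => by ring)
  · exact h.lt.mono fun s hs => sub_pos.2 (hs q r hqr hr.le)
  · exact (h.mem_Icc hr.le).mono fun s hs => sub_nonneg.2 hs.2
  · exact (h.mem_Icc (by omega)).mono fun s hs => hs.1

theorem hasRatioLim_outer_left {p q r : ℕ} (hpq : p < q) (hqr : q < r) (hr : r < N) :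
    HasRatioLim G (fun s => 1 - τ s r + τ s p) (fun s => τ s q - τ s p) := by
  suffices HasRatioLim G (fun s => τ s p + (1 - τ s r)) (fun s => τ s q - τ s p) from
    this.congr (.of_forall fun s => add_comm _ _) .rfl
  refine HasRatioLim.add_of_total ?_ ?_ ?_ ?_ ?_
  · rcases p.eq_zero_or_pos with rfl | hp
    · exact hasRatioLim_of_eventuallyEq_zero h.zero
    · refine (h.hasRatioLim_gaps hp hpq (hqr.trans hr).le).congr ?_ .rfl
      exact h.zero.mono fun s h0 => by simp only [h0, sub_zero]
  · refine ((h.hasRatioLim_ends hS hX hcl hqr hr).symm ?_).congr .rfl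
      (.of_forall fun s => by ring)
    filter_upwards [h.lt, h.one] with s hs h1
    exact sub_pos.2 (h1 ▸ hs r N hr le_rfl)
  · exact h.lt.mono fun s hs => sub_pos.2 (hs p q hpq (hqr.trans hr).le)
  · exact (h.mem_Icc (by omega)).mono fun s hs => hs.1
  · exact (h.mem_Icc hr.le).mono fun s hs => sub_nonneg.2 hs.2

variable [G.NeBot]

/-- The points `p < q < r` cut the circle into arcs of lengths `τ q - τ p`, `τ r - τ q` and
`1 - τ r + τ p`. -/
theorem hasRatioLim_sin_arcs {p q r : ℕ} (hpq : p < q) (hqr : q < r) (hr : r < N) :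
    HasRatioLim G (fun s => sin (π * (τ s q - τ s p))) (fun s => sin (π * (τ s r - τ s q))) ∧
    HasRatioLim G (fun s => sin (π * (τ s q - τ s p)))
      (fun s => sin (π * (1 - τ s r + τ s p))) ∧
    HasRatioLim G (fun s => sin (π * (1 - τ s r + τ s p)))
      (fun s => sin (π * (τ s r - τ s q))) := by
  have hu : ∀ᶠ s in G, 0 < τ s q - τ s p :=
    h.lt.mono fun s hs => sub_pos.2 (hs p q hpq (hqr.trans hr).le)
  have hv : ∀ᶠ s in G, 0 < τ s r - τ s q := h.lt.mono fun s hs => sub_pos.2 (hs q r hqr hr.le)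
  have hw : ∀ᶠ s in G, 0 < 1 - τ s r + τ s p := by
    filter_upwards [h.lt, h.one, h.mem_Icc (p := p) (by omega)] with s hs h1 hp
    linarith [hs r N hr le_rfl, hp.1]
  have lu := h.exists_tendsto_sub (p := p) (q := q) (by omega) (by omega)
  have lv := h.exists_tendsto_sub (p := q) (q := r) (by omega) hr.le
  have lw : ∃ c, Tendsto (fun s => 1 - τ s r + τ s p) G (𝓝 c) := by
    obtain ⟨c, hc⟩ := h.exists_tendsto_sub (p := p) (q := r) (by omega) hr.le
    exact ⟨1 - c, (hc.const_sub 1).congr fun s => by ring⟩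
  have huv := h.hasRatioLim_gaps hpq hqr hr.le
  have hwv := h.hasRatioLim_outer_right hS hX hcl hpq hqr hr
  have hwu := h.hasRatioLim_outer_left hS hX hcl hpq hqr hr
  exact ⟨hasRatioLim_sin lu lv hu hv hw (.of_forall fun s => by ring) huv hwv hwu,
    hasRatioLim_sin lu lw hu hw hv (.of_forall fun s => by ring) (hwu.symm hu) (hwv.symm hv)
      (huv.symm hv),
    hasRatioLim_sin lw lv hw hv hu (.of_forall fun s => by ring) hwv huv (hwu.symm hu)⟩

theorem hasRatioLim_chords {p q r : ℕ} (hpq : p < q) (hqr : q < r) (hr : r < N) :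
    HasRatioLim G (fun s => |sin (π * (τ s q - τ s p))|) (fun s => |sin (π * (τ s r - τ s p))|) ∧
    HasRatioLim G (fun s => |sin (π * (τ s p - τ s q))|) (fun s => |sin (π * (τ s r - τ s q))|) ∧
    HasRatioLim G (fun s => |sin (π * (τ s p - τ s r))|)
      (fun s => |sin (π * (τ s q - τ s r))|) := by
  have hlt : ∀ᶠ s in G, 0 ≤ τ s p ∧ τ s p < τ s q ∧ τ s q < τ s r ∧ τ s r < 1 := by
    filter_upwards [h.lt, h.one, h.mem_Icc (p := p) (by omega)] with s hs h1 hp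
    exact ⟨hp.1, hs p q hpq (by omega), hs q r hqr hr.le, h1 ▸ hs r N hr le_rfl⟩
  have hu : (fun s => sin (π * (τ s q - τ s p))) =ᶠ[G] fun s => |sin (π * (τ s q - τ s p))| :=
    hlt.mono fun s hs => (abs_of_pos (sin_pi_mul_pos (by linarith) (by linarith))).symm
  have hv : (fun s => sin (π * (τ s r - τ s q))) =ᶠ[G] fun s => |sin (π * (τ s r - τ s q))| :=
    hlt.mono fun s hs => (abs_of_pos (sin_pi_mul_pos (by linarith) (by linarith))).symm
  have hw : (fun s => sin (π * (1 - τ s r + τ s p))) =ᶠ[G]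
      fun s => |sin (π * (τ s r - τ s p))| := by
    filter_upwards [hlt] with s hs
    rw [show 1 - τ s r + τ s p = 1 - (τ s r - τ s p) by ring, sin_pi_mul_one_sub]
    exact (abs_of_pos (sin_pi_mul_pos (by linarith) (by linarith))).symm
  have hcomm (i j : ℕ) : (fun s => |sin (π * (τ s i - τ s j))|) =
      fun s => |sin (π * (τ s j - τ s i))| := by
    funext s
    rw [← neg_sub (τ s j), mul_neg, sin_neg, abs_neg]
  obtain ⟨huv, huw, hwv⟩ := h.hasRatioLim_sin_arcs hS hX hcl hpq hqr hr
  rw [hcomm p q, hcomm p r, hcomm q r]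
  exact ⟨huw.congr hu hw, huv.congr hu hv, hwv.congr hw hv⟩

theorem hasRatioLim_abs_sin_sub {k l m : ℕ} (hk : k < N) (hl : l < N) (hm : m < N) (hkl : k ≠ l)
    (hkm : k ≠ m) (hlm : l ≠ m) :
    HasRatioLim G (fun s => |sin (π * (τ s l - τ s k))|)
      (fun s => |sin (π * (τ s m - τ s k))|) := by
  wlog hlt : l < m generalizing l m
  · refine (this hm hl hkm hkl hlm.symm (by omega)).symm ?_
    filter_upwards [h.lt, h.one, h.mem_Icc hk.le, h.mem_Icc hl.le] with s hs h1 hk0 hl0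
    have hk1 := h1 ▸ hs k N hk le_rfl
    have hl1 := h1 ▸ hs l N hl le_rfl
    have hne : τ s l - τ s k ≠ 0 := sub_ne_zero.2 <|
      hkl.lt_or_gt.elim (fun hkl => (hs k l hkl hl.le).ne') fun hlk => (hs l k hlk hk.le).ne
    rw [abs_pos, Ne, sin_eq_zero_iff_of_lt_of_lt (by nlinarith [pi_pos, hl0.1])
      (by nlinarith [pi_pos, hk0.1])]
    exact mul_ne_zero pi_ne_zero hne
  rcases hkl.lt_or_gt with hkl | hkl
  · exact (h.hasRatioLim_chords hS hX hcl hkl hlt hm).1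
  rcases hkm.lt_or_gt with hkm | hkm
  · exact (h.hasRatioLim_chords hS hX hcl hkl hkm hm).2.1
  · exact (h.hasRatioLim_chords hS hX hcl hlt hkm hk).2.2

end TendsToRatios

end Chords

/-! ### Relative speeds of the boundary brackets -/

section StaircaseRank

open scoped Finset

variable {l r : ℕ} {α : Type*} {m M : α} {c : Fin l → Fin r → α}

open Classical in
/-- The rank of the `i`-th row in the ordering of all rows and columns of a staircase array in
which the `i`-th row comes after the `j`-th column if `c i j = m`.  The ranks of the columns are
those of the rows of the transposed array, with `M` in place of `m`. -/
noncomputable def staircaseRank (m : α) (c : Fin l → Fin r → α) (i : Fin l) : ℕ :=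
  i + #{j | c i j = m}

namespace IsStaircase

theorem staircaseRank_strictMono (hc : IsStaircase m M c) (hmM : m ≠ M) :
    StrictMono (staircaseRank m c) := by
  classical
  refine fun i i' h => add_lt_add_of_lt_of_le h (Finset.card_le_card fun j hj => ?_)
  simp only [Finset.mem_filter_univ] at hj ⊢
  exact hc.below h (hj ▸ hmM)

open Classical in
theorem card_eq_le (hc : IsStaircase m M c) (hmM : m ≠ M) {i : Fin l} {j : Fin r}
    (h : c i j ≠ m) : #{j' | c i j' = m} ≤ (j : ℕ) := by
  rw [← Fin.card_Iio j]
  refine Finset.card_le_card fun j' hj' => ?_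
  simp only [Finset.mem_filter_univ, Finset.mem_Iio] at hj' ⊢
  by_contra! hle
  rcases hle.eq_or_lt with rfl | hlt
  · exact h hj'
  · exact hmM (hj'.symm.trans (hc.right hlt h))

open Classical in
theorem le_card_eq (hc : IsStaircase m M c) {i : Fin l} {j : Fin r} (h : c i j ≠ M) :
    (j : ℕ) ≤ #{j' | c i j' = m} := by
  rw [← Fin.card_Iio j]
  refine Finset.card_le_card fun j' hj' => ?_
  simp only [Finset.mem_filter_univ, Finset.mem_Iio] at hj' ⊢
  by_contra hne
  exact h (hc.right hj' hne)

open Classical in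
theorem lt_card_eq (hc : IsStaircase m M c) (hmM : m ≠ M) {i : Fin l} {j : Fin r}
    (h : c i j = m) : (j : ℕ) < #{j' | c i j' = m} := by
  rw [Nat.lt_iff_add_one_le, ← Fin.card_Iic j]
  refine Finset.card_le_card fun j' hj' => ?_
  simp only [Finset.mem_filter_univ, Finset.mem_Iic] at hj' ⊢
  rcases hj'.eq_or_lt with rfl | hlt
  · exact h
  · by_contra hne
    exact hmM (h.symm.trans (hc.right hlt hne))

theorem transpose_staircaseRank_lt (hc : IsStaircase m M c) (hmM : m ≠ M) {i : Fin l} {j : Fin r}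
    (h : c i j = m) : staircaseRank M (fun j i => c i j) j < staircaseRank m c i := by
  have h₁ := hc.lt_card_eq hmM h
  have h₂ := hc.transpose.card_eq_le hmM.symm (i := j) (j := i) (h ▸ hmM)
  simp only [staircaseRank]
  omega

theorem staircaseRank_eq_transpose (hc : IsStaircase m M c) (hmM : m ≠ M) {i : Fin l} {j : Fin r}
    (hm : c i j ≠ m) (hM : c i j ≠ M) :
    staircaseRank m c i = staircaseRank M (fun j i => c i j) j := by
  have h₁ := (hc.card_eq_le hmM hm).antisymm (hc.le_card_eq hM)
  have h₂ := (hc.transpose.card_eq_le hmM.symm hM).antisymm (hc.transpose.le_card_eq hm)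
  rw [staircaseRank, staircaseRank, h₁, h₂, add_comm]

theorem eq_of_ne_extremes (hc : IsStaircase m M c) {i i' : Fin l} {j : Fin r} (hm : c i j ≠ m)
    (hM : c i j ≠ M) (hm' : c i' j ≠ m) (hM' : c i' j ≠ M) : i = i' := by
  by_contra hne
  rcases lt_or_gt_of_ne hne with h | h
  · exact hm' (hc.below h hM)
  · exact hm (hc.below h hM')

theorem exists_column_coeff {c : Fin l → Fin r → ℝ≥0∞} (hc : IsStaircase 0 ⊤ c) :
    ∃ κ : Fin r → ℝ, (∀ j, 0 < κ j) ∧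
      ∀ i j, c i j ≠ 0 → c i j ≠ ⊤ → c i j = ENNReal.ofReal (κ j)⁻¹ := by
  have h j : ∃ κ : ℝ, 0 < κ ∧ ∀ i, c i j ≠ 0 → c i j ≠ ⊤ → c i j = ENNReal.ofReal κ⁻¹ := by
    by_cases hex : ∃ i, c i j ≠ 0 ∧ c i j ≠ ⊤
    · obtain ⟨i, h0, ht⟩ := hex
      refine ⟨(c i j).toReal⁻¹, inv_pos.2 (ENNReal.toReal_pos h0 ht), fun i' h0' ht' => ?_⟩
      rw [hc.eq_of_ne_extremes h0' ht' h0 ht, inv_inv, ENNReal.ofReal_toReal ht]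
    · exact ⟨1, one_pos, fun i h0 ht => absurd ⟨i, h0, ht⟩ hex⟩
  choose κ hpos hκ using h
  exact ⟨κ, hpos, fun i j => hκ j i⟩

end IsStaircase

end StaircaseRank

section Speeds

open Filter Topology Asymptotics

/-- The right ends `a` of the brackets `(0, a i)` and the left ends `b` of the brackets `(b j, N)`,
apart from the root `(0, N)`, both listed from the largest bracket to the smallest one. -/
structure IsBoundaryEnum {l r : ℕ} (N : ℕ) (S : Finset (ℕ × ℕ)) (a : Fin l → ℕ) (b : Fin r → ℕ) :
    Prop where
  anti : StrictAnti a
  mono : StrictMono b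
  mem_left : ∀ m, ((0, m) ∈ S ∧ m < N) ↔ m ∈ Set.range a
  mem_right : ∀ m, ((m, N) ∈ S ∧ 0 < m) ↔ m ∈ Set.range b

variable {l r : ℕ} {c : Fin l → Fin r → ℝ≥0∞} {ι : Type*} {G : Filter ι} {N : ℕ}
  {S : Finset (ℕ × ℕ)} {X : ℕ → ℕ → ℕ → ℝ} {τ : ι → ℕ → ℝ} {a : Fin l → ℕ} {b : Fin r → ℕ}

namespace IsBoundaryEnum

theorem left (hab : IsBoundaryEnum N S a b) (i : Fin l) : (0, a i) ∈ S ∧ a i < N :=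
  (hab.mem_left _).2 ⟨i, rfl⟩

theorem right (hab : IsBoundaryEnum N S a b) (j : Fin r) : (b j, N) ∈ S ∧ 0 < b j :=
  (hab.mem_right _).2 ⟨j, rfl⟩

theorem root_or_boundary_or_inner (hab : IsBoundaryEnum N S a b) (hS : IsBracketSystem N S)
    {d : ℕ × ℕ} (hd : d ∈ S) : d = (0, N) ∨ (∃ i, d = (0, a i)) ∨ (∃ j, d = (b j, N)) ∨
      0 < d.1 ∧ d.2 < N := by
  obtain ⟨p, q⟩ := d
  rcases (hS.le _ hd).eq_or_lt with rfl | hq <;> rcases p.eq_zero_or_pos with rfl | hp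
  · exact .inl rfl
  · obtain ⟨j, rfl⟩ := (hab.mem_right p).1 ⟨hd, hp⟩
    exact .inr (.inr (.inl ⟨j, rfl⟩))
  · obtain ⟨i, rfl⟩ := (hab.mem_left q).1 ⟨hd, hq⟩
    exact .inr (.inl ⟨i, rfl⟩)
  · exact .inr (.inr (.inr ⟨hp, hq⟩))

theorem left_pos (hab : IsBoundaryEnum N S a b) (hS : IsBracketSystem N S) (i : Fin l) :
    0 < a i := hS.lt _ (hab.left i).1

theorem right_lt (hab : IsBoundaryEnum N S a b) (hS : IsBracketSystem N S) (j : Fin r) :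
    b j < N := hS.lt _ (hab.right j).1

theorem left_lt_right (hab : IsBoundaryEnum N S a b) (hS : IsBracketSystem N S) (i : Fin l)
    (j : Fin r) : a i < b j := by
  have := hS.compat _ (hab.left i).1 _ (hab.right j).1
  have := (hab.left i).2
  have := (hab.right j).2
  grind

theorem exists_extension (hab : IsBoundaryEnum N S a b) {β : Type*} (f : Fin l → β)
    (g : Fin r → β) (h : ℕ × ℕ → β) : ∃ e : ℕ × ℕ → β, (∀ i, e (0, a i) = f i) ∧
      (∀ j, e (b j, N) = g j) ∧ e (0, N) = h (0, N) ∧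
        ∀ d : ℕ × ℕ, 0 < d.1 → d.2 < N → e d = h d := by
  have ha : Function.Injective fun i => (0, a i) := fun i i' hi =>
    hab.anti.injective (Prod.mk.inj hi).2
  have hb : Function.Injective fun j => (b j, N) := fun j j' hj =>
    hab.mono.injective (Prod.mk.inj hj).1
  have hbpos j := (hab.right j).2.ne'
  have haN i := (hab.left i).2.ne
  refine ⟨Function.extend (fun i => (0, a i)) f (Function.extend (fun j => (b j, N)) g h),
    ha.extend_apply _ _, fun j => ?_, ?_, fun d h0 hN => ?_⟩
  · rw [Function.extend_apply', hb.extend_apply]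
    rintro ⟨i, hi⟩
    exact hbpos j (Prod.mk.inj hi).1.symm
  · rw [Function.extend_apply', Function.extend_apply']
    · rintro ⟨j, hj⟩
      exact hbpos j (Prod.mk.inj hj).1
    · rintro ⟨i, hi⟩
      exact haN i (Prod.mk.inj hi).2
  · rw [Function.extend_apply', Function.extend_apply']
    · rintro ⟨j, rfl⟩
      exact hN.ne rfl
    · rintro ⟨i, rfl⟩
      exact h0.ne rfl

theorem nested_cases (hab : IsBoundaryEnum N S a b) (hS : IsBracketSystem N S) {d d' : ℕ × ℕ}
    (hd : d ∈ S) (hd' : d' ∈ S) (h₁ : d'.1 ≤ d.1) (h₂ : d.2 ≤ d'.2) (hne : d ≠ d') :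
    d' = (0, N) ∨ (∃ i' i, i' < i ∧ d' = (0, a i') ∧ d = (0, a i)) ∨
      (∃ j' j, j' < j ∧ d' = (b j', N) ∧ d = (b j, N)) ∨ 0 < d.1 ∧ d.2 < N := by
  rcases hab.root_or_boundary_or_inner hS hd with rfl | ⟨i, rfl⟩ | ⟨j, rfl⟩ | hinner
  · exact absurd (Prod.ext (Nat.le_zero.1 h₁).symm (h₂.antisymm (hS.le d' hd'))) hne
  · rcases hab.root_or_boundary_or_inner hS hd' with rfl | ⟨i', rfl⟩ | ⟨j', rfl⟩ | hinner'
    · exact .inl rfl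
    · have hlt : a i < a i' := h₂.lt_of_ne fun h => hne (Prod.ext rfl h)
      exact .inr (.inl ⟨i', i, hab.anti.lt_iff_gt.1 hlt, rfl, rfl⟩)
    · exact absurd h₁ (hab.right j').2.not_ge
    · exact absurd h₁ hinner'.1.not_ge
  · rcases hab.root_or_boundary_or_inner hS hd' with rfl | ⟨i', rfl⟩ | ⟨j', rfl⟩ | hinner'
    · exact .inl rfl
    · exact absurd h₂ (hab.left i').2.not_ge
    · have hlt : b j' < b j := h₁.lt_of_ne fun h => hne (Prod.ext h.symm rfl)
      exact .inr (.inr (.inl ⟨j', j, hab.mono.lt_iff_lt.1 hlt, rfl, rfl⟩))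
    · exact absurd h₂ hinner'.2.not_ge
  · exact .inr (.inr (.inr hinner))

theorem exists_exponents (hab : IsBoundaryEnum N S a b) (hS : IsBracketSystem N S)
    {f : Fin l → ℕ} {g : Fin r → ℕ} (hf : StrictMono f) (hg : StrictMono g) :
    ∃ e : ℕ × ℕ → ℕ, e (0, N) = 0 ∧ (∀ i, e (0, a i) = f i + 1) ∧ (∀ j, e (b j, N) = g j + 1) ∧
      ∀ d ∈ S, ∀ d' ∈ S, d'.1 ≤ d.1 → d.2 ≤ d'.2 → d ≠ d' → e d' < e d := by
  obtain ⟨C, hfC, hgC⟩ : ∃ C, (∀ i, f i + 1 < C) ∧ ∀ j, g j + 1 < C := by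
    refine ⟨∑ i, f i + ∑ j, g j + 2, fun i => ?_, fun j => ?_⟩
    · have := Finset.single_le_sum_of_canonicallyOrdered (f := f) (Finset.mem_univ i)
      omega
    · have := Finset.single_le_sum_of_canonicallyOrdered (f := g) (Finset.mem_univ j)
      omega
  obtain ⟨e, he_left, he_right, he_root, he_inner⟩ := hab.exists_extension (fun i => f i + 1)
    (fun j => g j + 1) fun d => (C + 1) * (N - (d.2 - d.1))
  simp only [Nat.sub_zero, Nat.sub_self, Nat.mul_zero] at he_root
  have hlt_inner d (hd : d ∈ S) (hd0 : 0 < d.1) (hdN : d.2 < N) : C < e d := by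
    have := hS.lt d hd
    exact he_inner d hd0 hdN ▸ Nat.le_mul_of_pos_right _ (by omega)
  refine ⟨e, he_root, he_left, he_right, fun d hd d' hd' h₁ h₂ hne => ?_⟩
  rcases hab.nested_cases hS hd hd' h₁ h₂ hne with
    rfl | ⟨i', i, hi, rfl, rfl⟩ | ⟨j', j, hj, rfl, rfl⟩ | ⟨hd0, hdN⟩
  · rw [he_root]
    rcases hab.root_or_boundary_or_inner hS hd with rfl | ⟨i, rfl⟩ | ⟨j, rfl⟩ | ⟨hd0, hdN⟩
    · exact absurd rfl hne
    · exact he_left i ▸ Nat.succ_pos _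
    · exact he_right j ▸ Nat.succ_pos _
    · exact (Nat.zero_le C).trans_lt (hlt_inner d hd hd0 hdN)
  · exact he_left i ▸ he_left i' ▸ Nat.succ_lt_succ (hf hi)
  · exact he_right j ▸ he_right j' ▸ Nat.succ_lt_succ (hg hj)
  · have hCd := hlt_inner d hd hd0 hdN
    rcases hab.root_or_boundary_or_inner hS hd' with rfl | ⟨i', rfl⟩ | ⟨j', rfl⟩ | ⟨hd0', hdN'⟩
    · exact he_root.trans_lt ((Nat.zero_le C).trans_lt hCd)
    · exact he_left i' ▸ (hfC i').trans hCd
    · exact he_right j' ▸ (hgC j').trans hCd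
    · have := hS.lt d hd
      rw [he_inner d hd0 hdN, he_inner d' hd0' hdN']
      exact Nat.mul_lt_mul_of_pos_left (by grind) C.succ_pos

end IsBoundaryEnum

theorem tendsto_const_mul_pow_div_const_mul_pow {k k' : ℝ} {e e' : ℕ} (he : e' < e) :
    Tendsto (fun δ : ℝ => k * δ ^ e / (k' * δ ^ e')) (𝓝[>] 0) (𝓝 0) := by
  have h : Tendsto (fun δ : ℝ => k / k' * δ ^ (e - e')) (𝓝 0) (𝓝 (k / k' * 0 ^ (e - e'))) :=
    (continuous_const.mul (continuous_pow _)).tendsto 0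
  rw [zero_pow (Nat.sub_pos_of_lt he).ne', mul_zero] at h
  refine (h.mono_left nhdsWithin_le_nhds).congr' ?_
  filter_upwards [self_mem_nhdsWithin] with δ hδ
  rw [mul_div_mul_comm, pow_sub₀ _ (Set.mem_Ioi.1 hδ).ne' he.le, div_eq_mul_inv (δ ^ e)]

theorem IsBoundaryEnum.exists_scales (hab : IsBoundaryEnum N S a b) (hS : IsBracketSystem N S)
    (hc : IsStaircase 0 ⊤ c) : ∃ Λ : ℕ × ℕ → ℝ → ℝ, (∀ d ∈ S, ∀ᶠ δ in 𝓝[>] 0, 0 < Λ d δ) ∧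
      (∀ δ, Λ (0, N) δ = 1) ∧
      (∀ d ∈ S, ∀ d' ∈ S, d'.1 ≤ d.1 → d.2 ≤ d'.2 → d ≠ d' →
        Tendsto (fun δ => Λ d δ / Λ d' δ) (𝓝[>] 0) (𝓝 0)) ∧
      ∀ i j, RatioTendsto (𝓝[>] 0) (Λ (0, a i)) (Λ (b j, N)) (c i j) := by
  have h0t : (0 : ℝ≥0∞) ≠ ⊤ := ENNReal.zero_ne_top
  obtain ⟨κ, hκ, hcκ⟩ := hc.exists_column_coeff
  obtain ⟨e, he_root, he_left, he_right, he⟩ := hab.exists_exponents hS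
    (hc.staircaseRank_strictMono h0t) (hc.transpose.staircaseRank_strictMono h0t.symm)
  obtain ⟨k, hk_left, hk_right, hk_root, hk_inner⟩ :=
    hab.exists_extension (fun _ => (1 : ℝ)) κ fun _ => 1
  have hk d (hd : d ∈ S) : 0 < k d := by
    rcases hab.root_or_boundary_or_inner hS hd with rfl | ⟨i, rfl⟩ | ⟨j, rfl⟩ | ⟨h0, hN⟩
    · exact hk_root ▸ one_pos
    · exact hk_left i ▸ one_pos
    · exact hk_right j ▸ hκ j
    · exact hk_inner d h0 hN ▸ one_pos
  have hpos d (hd : d ∈ S) : ∀ᶠ δ in 𝓝[>] (0 : ℝ), 0 < k d * δ ^ e d :=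
    eventually_mem_nhdsWithin.mono fun δ hδ => mul_pos (hk d hd) (pow_pos hδ _)
  have hpos_left i := hpos _ (hab.left i).1
  have hpos_right j := hpos _ (hab.right j).1
  have hroot (δ : ℝ) : k (0, N) * δ ^ e (0, N) = 1 := by rw [hk_root, he_root, pow_zero, one_mul]
  refine ⟨fun d δ => k d * δ ^ e d, hpos, hroot,
    fun d hd d' hd' h₁ h₂ hne =>
      tendsto_const_mul_pow_div_const_mul_pow (he d hd d' hd' h₁ h₂ hne), fun i j => ?_⟩
  by_cases hc0 : c i j = 0
  · rw [hc0, ← ENNReal.ofReal_zero]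
    refine ratioTendsto_of_tendsto_div (tendsto_const_mul_pow_div_const_mul_pow ?_) (hpos_right j)
    rw [he_left, he_right]
    exact Nat.succ_lt_succ (hc.transpose_staircaseRank_lt h0t hc0)
  by_cases hct : c i j = ⊤
  · rw [hct, ← ENNReal.inv_zero, ← ENNReal.ofReal_zero]
    refine (ratioTendsto_of_tendsto_div (tendsto_const_mul_pow_div_const_mul_pow ?_)
      (hpos_left i)).symm (hpos_left i)
    rw [he_left, he_right]
    exact Nat.succ_lt_succ (hc.transpose.transpose_staircaseRank_lt h0t.symm hct)
  rw [hcκ i j hc0 hct]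
  refine ratioTendsto_of_tendsto_div (tendsto_const_nhds.congr' ?_) (hpos_right j)
  filter_upwards [self_mem_nhdsWithin] with δ hδ
  rw [he_left, he_right, hc.staircaseRank_eq_transpose h0t hc0 hct, hk_left, hk_right,
    mul_div_mul_right _ _ (pow_pos hδ _).ne', one_div]

namespace TendsToRatios

variable (h : TendsToRatios N X G τ) (hS : IsBracketSystem N S) (hX : IsStratumPoint N S X)
include h hS hX

theorem ratioTendsto_size_zero {b c : ℕ × ℕ} (hb : b ∈ S) (hc : c ∈ S)
    (h₁ : c.1 ≤ b.1) (h₂ : b.2 ≤ c.2) (hbc : b ≠ c) :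
    RatioTendsto G (fun s => τ s b.2 - τ s b.1) (fun s => τ s c.2 - τ s c.1) 0 := by
  rw [← ENNReal.ofReal_zero]
  refine ratioTendsto_of_tendsto_div (h.tendsto_size_div_size hS hX hb hc h₁ h₂ hbc) ?_
  filter_upwards [h.lt] with s hs
  exact sub_pos.2 (hs _ _ (hS.lt c hc) (hS.le c hc))

variable (hab : IsBoundaryEnum N S a b)
include hab

theorem isStaircase [G.NeBot]
    (hc : ∀ i j, RatioTendsto G (fun s => τ s (a i)) (fun s => 1 - τ s (b j)) (c i j)) :
    IsStaircase 0 ⊤ c := by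
  have hleft i : (fun s => τ s (a i) - τ s 0) =ᶠ[G] fun s => τ s (a i) := by
    filter_upwards [h.zero] with s hs
    rw [hs, sub_zero]
  have hright j : (fun s => τ s N - τ s (b j)) =ᶠ[G] fun s => 1 - τ s (b j) := by
    filter_upwards [h.one] with s hs
    rw [hs]
  have hapos i : ∀ᶠ s in G, 0 < τ s (a i) := by
    filter_upwards [h.lt, h.zero] with s hs hs0
    exact hs0 ▸ hs 0 (a i) (hab.left_pos hS i) (hab.left i).2.le
  have hbpos j : ∀ᶠ s in G, 0 < 1 - τ s (b j) := by
    filter_upwards [h.lt, h.one] with s hs hs1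
    exact sub_pos.2 (hs1 ▸ hs (b j) N (hab.right_lt hS j) le_rfl)
  constructor
  · intro i i' j hi hne
    have hlt := hab.anti hi
    have hzero := (h.ratioTendsto_size_zero hS hX (hab.left i').1 (hab.left i).1 le_rfl hlt.le
      (by simpa using hlt.ne)).congr (hleft i') (hleft i)
    exact tendsto_nhds_unique (hc i' j) (hzero.zero_trans (hc i j) hne (hapos i))
  · intro i j j' hj hne
    have hlt := hab.mono hj
    have hzero := (h.ratioTendsto_size_zero hS hX (hab.right j').1 (hab.right j).1 hlt.le le_rfl
      (by simpa using hlt.ne')).congr (hright j') (hright j)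
    have := (hzero.zero_trans ((hc i j).symm (hbpos j)) (ENNReal.inv_ne_top.2 hne) (hbpos j)).symm
      (hapos i)
    exact tendsto_nhds_unique (hc i j') (ENNReal.inv_zero ▸ this)

theorem exists_of_isStaircase [G.NeBot] (hc : IsStaircase 0 ⊤ c) :
    ∃ τ' : ℝ → ℕ → ℝ, TendsToRatios N X (𝓝[>] 0) τ' ∧
      ∀ i j, RatioTendsto (𝓝[>] 0) (fun δ => τ' δ (a i)) (fun δ => 1 - τ' δ (b j)) (c i j) := by
  obtain ⟨Λ, hpos, hroot, hnest, hspeed⟩ := hab.exists_scales hS hc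
  obtain ⟨τ', hτ', hsize⟩ := h.exists_of_scales hS hX hpos hroot hnest
  have hequiv d (hd : d ∈ S) : (fun δ => τ' δ d.2 - τ' δ d.1) ~[𝓝[>] 0] Λ d :=
    isEquivalent_of_tendsto_one (hsize d hd)
  refine ⟨τ', hτ', fun i j => ?_⟩
  refine ((hspeed i j).congr_isEquivalent (hequiv _ (hab.left i).1)
    (hequiv _ (hab.right j).1)).congr ?_ ?_
  · filter_upwards [hτ'.zero] with δ hδ
    rw [hδ, sub_zero]
  · filter_upwards [hτ'.one] with δ hδ
    rw [hδ]

end TendsToRatios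

end Speeds

/-! ### Points of the associahedron and the cyclohedron -/

section Configurations

open Filter Topology Real

variable {ι : Type*} {n m : ℕ} {G : Filter ι} {t : ι → Fin n → ℝ}

/-- The points `t 0 = 0, t 1, …, t n, t (n + 1) = 1`, indexed by natural numbers; the value at an
index `p > n + 1` is the junk value `0`. -/
noncomputable def extNat (t : Fin n → ℝ) (p : ℕ) : ℝ :=
  if h : p < n + 2 then ext01 t ⟨p, h⟩ else 0

theorem ext01_eq_extNat (t : Fin n → ℝ) (p : Fin (n + 2)) : ext01 t p = extNat t p := by
  rw [extNat, dif_pos p.2]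

theorem extNat_zero (t : Fin n → ℝ) : extNat t 0 = 0 :=
  (ext01_eq_extNat t 0).symm

theorem extNat_last (t : Fin n → ℝ) : extNat t (n + 1) = 1 := by
  rw [← Fin.val_last (n + 1), ← ext01_eq_extNat, ← Fin.succ_last, ext01, Fin.cons_succ,
    Fin.snoc_last]

theorem extNat_succ (t : Fin n → ℝ) (p : Fin n) : extNat t (p + 1) = t p := by
  rw [← Fin.val_castSucc p, ← Fin.val_succ, ← ext01_eq_extNat, ext01, Fin.cons_succ,
    Fin.snoc_castSucc]

theorem extNat_of_pos_of_lt (t : Fin n → ℝ) {p : ℕ} (hp : 0 < p) (hpn : p < n + 1) :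
    extNat t p = t ⟨p - 1, by omega⟩ := by
  obtain ⟨p, rfl⟩ := Nat.exists_eq_succ_of_ne_zero hp.ne'
  exact extNat_succ t ⟨p, Nat.lt_of_succ_lt_succ hpn⟩

theorem ext0_eq_extNat (t : Fin n → ℝ) (p : Fin (n + 1)) : ext0 t p = extNat t p := by
  cases p using Fin.cases with
  | zero => exact (extNat_zero t).symm
  | succ q => rw [ext0, Fin.cons_succ, Fin.val_succ, extNat_succ]

theorem mem_openSimplex_iff {t : Fin n → ℝ} :
    t ∈ openSimplex n ↔ ∀ i k, i < k → k ≤ n + 1 → extNat t i < extNat t k := by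
  refine ⟨fun ⟨hlt, hpos, hlt_one⟩ i k hik hk => ?_, fun h => ⟨fun i j hij => ?_, fun i => ?_,
    fun i => ?_⟩⟩
  · rcases i.eq_zero_or_pos with rfl | hi <;> rcases hk.eq_or_lt with rfl | hkn
    · rw [extNat_zero, extNat_last]
      exact one_pos
    · rw [extNat_zero, extNat_of_pos_of_lt t hik hkn]
      exact hpos _
    · rw [extNat_last, extNat_of_pos_of_lt t hi hik]
      exact hlt_one _
    · rw [extNat_of_pos_of_lt t hi (hik.trans hkn), extNat_of_pos_of_lt t (hi.trans hik) hkn]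
      exact hlt _ _ (Fin.mk_lt_mk.2 (by omega))
  · rw [← extNat_succ t i, ← extNat_succ t j]
    exact h _ _ (Nat.succ_lt_succ hij) (by omega)
  · rw [← extNat_succ t i, ← extNat_zero t]
    exact h _ _ (Nat.succ_pos _) (by omega)
  · rw [← extNat_succ t i, ← extNat_last t]
    exact h _ _ (by omega) le_rfl

/-- The coordinates of a point of the associahedron, indexed by natural numbers; outside of the
range `i < j < k ≤ n + 1` they have the junk value `0`. -/
noncomputable def ratioNat (x : TriIdx n → ℝ) (i j k : ℕ) : ℝ :=
  if h : i < j ∧ j < k ∧ k < n + 2 then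
    x ⟨(⟨i, h.1.trans (h.2.1.trans h.2.2)⟩, ⟨j, h.2.1.trans h.2.2⟩, ⟨k, h.2.2⟩), h.1, h.2.1⟩
  else 0

theorem ratioNat_eq (x : TriIdx n → ℝ) (q : TriIdx n) :
    ratioNat x q.1.1 q.1.2.1 q.1.2.2 = x q := by
  rw [ratioNat, dif_pos ⟨q.2.1, q.2.2, q.1.2.2.2⟩]

theorem exists_triIdx {i j k : ℕ} (hij : i < j) (hjk : j < k) (hk : k ≤ n + 1) :
    ∃ q : TriIdx n, q.1.1 = i ∧ q.1.2.1 = j ∧ q.1.2.2 = k :=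
  ⟨⟨(⟨i, by omega⟩, ⟨j, by omega⟩, ⟨k, by omega⟩), hij, hjk⟩, rfl, rfl, rfl⟩

theorem tendsToRatios_extNat_iff {x : TriIdx n → ℝ} :
    TendsToRatios (n + 1) (ratioNat x) G (fun s => extNat (t s)) ↔
      (∀ᶠ s in G, t s ∈ openSimplex n) ∧ Tendsto (fun s => alphaMap n (t s)) G (𝓝 x) := by
  simp only [mem_openSimplex_iff, tendsto_pi_nhds, alphaMap, ext01_eq_extNat]
  refine ⟨fun h => ⟨h.lt, fun q => ?_⟩, fun ⟨hlt, hlim⟩ => ⟨.of_forall fun s => extNat_zero _,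
    .of_forall fun s => extNat_last _, hlt, fun hij hjk hk => ?_⟩⟩
  · rw [← ratioNat_eq x q]
    exact h.lim q.2.1 q.2.2 q.1.2.2.is_le
  · obtain ⟨q, rfl, rfl, rfl⟩ := exists_triIdx hij hjk hk
    rw [ratioNat_eq]
    exact hlim q

theorem TendsToRatios.eventually_eq_extNat {X : ℕ → ℕ → ℕ → ℝ} {τ : ι → ℕ → ℝ}
    (h : TendsToRatios (n + 1) X G τ) :
    ∀ᶠ s in G, ∀ p ≤ n + 1, τ s p = extNat (fun q : Fin n => τ s (q + 1)) p := by
  filter_upwards [h.zero, h.one] with s h0 h1 p hp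
  rcases p.eq_zero_or_pos with rfl | hp0
  · rw [h0, extNat_zero]
  rcases hp.eq_or_lt with rfl | hpn
  · rw [h1, extNat_last]
  · rw [extNat_of_pos_of_lt _ hp0 hpn, Nat.sub_add_cancel hp0]

theorem TendsToRatios.congr {N : ℕ} {X : ℕ → ℕ → ℕ → ℝ} {τ τ' : ι → ℕ → ℝ}
    (h : TendsToRatios N X G τ) (hτ : ∀ᶠ s in G, ∀ p ≤ N, τ s p = τ' s p) :
    TendsToRatios N X G τ' where
  zero := by filter_upwards [h.zero, hτ] with s h0 hs using hs 0 N.zero_le ▸ h0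
  one := by filter_upwards [h.one, hτ] with s h1 hs using hs N le_rfl ▸ h1
  lt := by
    filter_upwards [h.lt, hτ] with s hlt hs i k hik hk
    exact hs i (hik.le.trans hk) ▸ hs k hk ▸ hlt i k hik hk
  lim {i j k} hij hjk hk := by
    refine (h.lim hij hjk hk).congr' ?_
    filter_upwards [hτ] with s hs
    rw [hs i (by omega), hs j (by omega), hs k hk]

/-- The brackets of a `Ψ`-tree, together with the full interval. -/
noncomputable def natBrackets (S : Psi m) : Finset (ℕ × ℕ) :=
  insert (0, m) (S.1.image Subtype.val)

theorem mem_natBrackets {S : Psi m} {d : ℕ × ℕ} :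
    d ∈ natBrackets S ↔ d = (0, m) ∨ ∃ b ∈ S.1, b.1 = d := by
  simp only [natBrackets, Finset.mem_insert, Finset.mem_image]

theorem PsiCompat.separated_or_nested {b c : PsiBracket m} (h : PsiCompat b c) :
    b.1.2 < c.1.1 ∨ c.1.2 < b.1.1 ∨ (c.1.1 ≤ b.1.1 ∧ b.1.2 ≤ c.1.2) ∨
      (b.1.1 ≤ c.1.1 ∧ c.1.2 ≤ b.1.2) := by
  rcases h with h | h | h
  · have hmax : max b.1.1 c.1.1 ∉ b.leaves ∩ c.leaves := fun hmem =>
      Set.disjoint_iff.1 h hmem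
    simp only [PsiBracket.leaves, Set.mem_inter_iff, Set.mem_Icc] at hmax
    have := b.2.1
    have := c.2.1
    omega
  · exact .inr (.inr (.inl ((Set.Icc_subset_Icc_iff b.2.1.le).1 h)))
  · exact .inr (.inr (.inr ((Set.Icc_subset_Icc_iff c.2.1.le).1 h)))

theorem isBracketSystem_natBrackets (hm : 0 < m) (S : Psi m) :
    IsBracketSystem m (natBrackets S) where
  root := Finset.mem_insert_self _ _
  lt d hd := by
    rcases mem_natBrackets.1 hd with rfl | ⟨b, -, rfl⟩
    exacts [hm, b.2.1]
  le d hd := by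
    rcases mem_natBrackets.1 hd with rfl | ⟨b, -, rfl⟩
    exacts [le_rfl, b.2.2.1]
  compat d hd d' hd' := by
    rcases mem_natBrackets.1 hd with rfl | ⟨b, hb, rfl⟩ <;>
      rcases mem_natBrackets.1 hd' with rfl | ⟨c, hc, rfl⟩
    · exact .inr (.inr (.inl ⟨le_rfl, le_rfl⟩))
    · exact .inr (.inr (.inr ⟨Nat.zero_le _, c.2.2.1⟩))
    · exact .inr (.inr (.inl ⟨Nat.zero_le _, b.2.2.1⟩))
    · exact (S.2 b hb c hc).separated_or_nested

theorem closer_natBrackets_iff (S : Psi m) {i j k : ℕ} (hk : k ≤ m) :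
    Closer (natBrackets S) i j k ↔ PsiCloser S i j k := by
  constructor
  · rintro ⟨d, hd, hi, hj, hk'⟩
    rcases mem_natBrackets.1 hd with rfl | ⟨b, hb, rfl⟩
    · exact absurd ⟨k.zero_le, hk⟩ hk'
    · exact ⟨b, hb, hi, hj, hk'⟩
  · rintro ⟨b, hb, hi, hj, hk'⟩
    exact ⟨b.1, mem_natBrackets.2 (.inr ⟨b, hb, rfl⟩), hi, hj, hk'⟩

theorem neBot_comap_nhds_inf_principal {α β : Type*} [TopologicalSpace β] {f : α → β} {s : Set α}
    {y : β} (hy : y ∈ closure (f '' s)) : (comap f (𝓝 y) ⊓ 𝓟 s).NeBot := by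
  rw [mem_closure_iff_clusterPt, ClusterPt, ← map_principal, inf_comm] at hy
  rw [inf_comm]
  exact neBot_inf_comap_iff_map.2 hy

theorem tendsToRatios_comap_alphaMap (x : TriIdx n → ℝ) :
    TendsToRatios (n + 1) (ratioNat x) (comap (alphaMap n) (𝓝 x) ⊓ 𝓟 (openSimplex n)) extNat :=
  tendsToRatios_extNat_iff.2 ⟨mem_inf_of_right (mem_principal_self _),
    tendsto_comap.mono_left inf_le_left⟩

theorem mem_Icc_of_mem_Assoc {x : TriIdx n → ℝ} (hx : x ∈ Assoc n) (q : TriIdx n) :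
    x q ∈ Set.Icc (0 : ℝ) 1 := by
  refine closure_minimal (t := (fun x => x q) ⁻¹' Set.Icc 0 1) ?_
    (isClosed_Icc.preimage (continuous_apply q)) hx
  rintro _ ⟨t, ht, rfl⟩
  have hlt := mem_openSimplex_iff.1 ht
  have hij := hlt _ _ q.2.1 q.1.2.1.is_le
  have hjk := hlt _ _ q.2.2 q.1.2.2.is_le
  simp only [Set.mem_preimage, alphaMap, ext01_eq_extNat]
  exact ⟨div_nonneg (by linarith) (by linarith), div_le_one_of_le₀ (by linarith) (by linarith)⟩

theorem isStratumPoint_ratioNat {S : Psi (n + 1)} {x : TriIdx n → ℝ} (hx : x ∈ openStratum n S) :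
    IsStratumPoint (n + 1) (natBrackets S) (ratioNat x) := by
  constructor <;> intro i j k hij hjk hk <;> obtain ⟨q, rfl, rfl, rfl⟩ := exists_triIdx hij hjk hk
    <;> rw [ratioNat_eq]
  · exact (mem_Icc_of_mem_Assoc hx.1 q).1
  · exact (mem_Icc_of_mem_Assoc hx.1 q).2
  · exact (hx.2 q).1.trans (closer_natBrackets_iff S hk).symm
  · exact (hx.2 q).2.trans (closer_natBrackets_iff S q.1.1.is_le).symm

open scoped Finset in
theorem exists_strictMono_range_eq_image {β : Type*} {k : ℕ} {s : Finset β} {f : β → ℕ}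
    (hf : Set.InjOn f s) (hs : #s = k) : ∃ e : Fin k → ℕ, StrictMono e ∧ Set.range e = f '' s := by
  have hcard : #(s.image f) = k := (Finset.card_image_of_injOn hf).trans hs
  refine ⟨_, ((s.image f).orderEmbOfFin hcard).strictMono, ?_⟩
  rw [Finset.range_orderEmbOfFin, Finset.coe_image]

theorem exists_isBoundaryEnum (S : Psi m) {l r : ℕ}
    (hl : (S.1.filter fun b => b.1.1 = 0).card = l)
    (hr : (S.1.filter fun b => b.1.2 = m).card = r) :
    ∃ (a : Fin l → ℕ) (b : Fin r → ℕ), IsBoundaryEnum m (natBrackets S) a b := by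
  obtain ⟨a, ha, ha_range⟩ := exists_strictMono_range_eq_image (f := fun d => d.1.2)
    (fun d hd d' hd' h => Subtype.ext (Prod.ext
      ((Finset.mem_filter.1 hd).2.trans (Finset.mem_filter.1 hd').2.symm) h)) hl
  obtain ⟨b, hb, hb_range⟩ := exists_strictMono_range_eq_image (f := fun d => d.1.1)
    (fun d hd d' hd' h => Subtype.ext (Prod.ext h
      ((Finset.mem_filter.1 hd).2.trans (Finset.mem_filter.1 hd').2.symm))) hr
  refine ⟨a ∘ Fin.rev, b, ha.comp_strictAnti Fin.rev_strictAnti, hb, fun p => ?_, fun p => ?_⟩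
  · rw [Fin.rev_surjective.range_comp, ha_range, mem_natBrackets]
    constructor
    · rintro ⟨h | ⟨d, hd, h⟩, hp⟩
      · exact absurd (congrArg Prod.snd h) hp.ne
      · exact ⟨d, Finset.mem_filter.2 ⟨hd, congrArg Prod.fst h⟩, congrArg Prod.snd h⟩
    · rintro ⟨d, hd, rfl⟩
      obtain ⟨hd, h0⟩ := Finset.mem_filter.1 hd
      exact ⟨.inr ⟨d, hd, Prod.ext h0 rfl⟩, d.2.2.1.lt_of_ne fun h => d.2.2.2 ⟨h0, h⟩⟩
  · rw [hb_range, mem_natBrackets]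
    constructor
    · rintro ⟨h | ⟨d, hd, h⟩, hp⟩
      · exact absurd (congrArg Prod.fst h) hp.ne'
      · exact ⟨d, Finset.mem_filter.2 ⟨hd, congrArg Prod.snd h⟩, congrArg Prod.fst h⟩
    · rintro ⟨d, hd, rfl⟩
      obtain ⟨hd, hm⟩ := Finset.mem_filter.1 hd
      exact ⟨.inr ⟨d, hd, Prod.ext rfl hm⟩, Nat.pos_of_ne_zero fun h => d.2.2.2 ⟨h, hm⟩⟩

theorem isCompact_Cycl (n : ℕ) : IsCompact (Cycl n) := by
  have hbox : IsCompact (Set.univ.pi (fun _ : Fin n => Set.Icc (0 : ℝ) 1) ×ˢ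
      (Set.univ : Set (TripleIdx n → ℝ≥0∞))) :=
    (isCompact_univ_pi fun _ => isCompact_Icc).prod isCompact_univ
  refine hbox.of_isClosed_subset isClosed_closure (closure_minimal ?_ hbox.isClosed)
  rintro _ ⟨t, ht, rfl⟩
  exact ⟨fun i _ => ⟨(ht.2.1 i).le, (ht.2.2 i).le⟩, Set.mem_univ _⟩

theorem sTilde_eq (t : Fin n → ℝ) (q : TripleIdx n) : sTilde n t q =
    ENNReal.ofReal |sin (π * (extNat t q.1.2.1 - extNat t q.1.1))| /
      ENNReal.ofReal |sin (π * (extNat t q.1.2.2 - extNat t q.1.1))| := by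
  simp only [sTilde, ext0_eq_extNat]

theorem tendsto_sTilde_iff {S : Finset (ℕ × ℕ)} {X : ℕ → ℕ → ℕ → ℝ}
    (hX : IsStratumPoint (n + 1) S X) (h : TendsToRatios (n + 1) X G (fun s => extNat (t s)))
    {q : TripleIdx n} (hq : q.1.1 = 0) (ha : (0, q.1.2.1.1) ∈ S) (hb : (q.1.2.2.1, n + 1) ∈ S)
    {L : ℝ≥0∞} :
    Tendsto (fun s => sTilde n (t s) q) G (𝓝 L) ↔
      RatioTendsto G (fun s => extNat (t s) q.1.2.1) (fun s => 1 - extNat (t s) q.1.2.2) L := by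
  obtain ⟨⟨q₀, q₁, q₂⟩, hq₁, hq₂, _⟩ := q
  obtain rfl : q₀ = 0 := hq
  have h₁ : 0 < q₁.1 := Fin.pos_iff_ne_zero.2 hq₁.symm
  have h₂ : 0 < q₂.1 := Fin.pos_iff_ne_zero.2 hq₂.symm
  have hmem (p : Fin (n + 1)) (hp : 0 < p.1) :
      ∀ᶠ s in G, 0 < extNat (t s) p ∧ extNat (t s) p < 1 := by
    filter_upwards [h.lt] with s hs
    exact ⟨extNat_zero (t s) ▸ hs 0 p hp p.2.le, extNat_last (t s) ▸ hs p (n + 1) p.2 le_rfl⟩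
  rw [← ratioTendsto_sin_iff (h.tendsto_left_zero hX ha h₁ q₁.2)
    (h.tendsto_right_zero hX hb h₂ q₂.2)]
  refine tendsto_congr' ?_
  filter_upwards [hmem q₁ h₁, hmem q₂ h₂] with s hs₁ hs₂
  rw [sTilde_eq, sin_pi_mul_one_sub, Fin.val_zero, extNat_zero, sub_zero, sub_zero,
    abs_of_pos (sin_pi_mul_pos hs₁.1 hs₁.2), abs_of_pos (sin_pi_mul_pos hs₂.1 hs₂.2)]

end Configurations

section SignedUnit

/-- The increasing homeomorphism of `[0, ∞]` onto `[-1, 1]`. -/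
noncomputable def signedUnit (z : ℝ≥0∞) : ℝ :=
  2 * (ENNReal.orderIsoUnitIntervalBirational z : ℝ) - 1

theorem continuous_signedUnit : Continuous signedUnit :=
  (continuous_const.mul (continuous_subtype_val.comp
    ENNReal.orderIsoUnitIntervalBirational.continuous)).sub continuous_const

theorem signedUnit_injective : Function.Injective signedUnit := fun x y h =>
  ENNReal.orderIsoUnitIntervalBirational.injective <| Subtype.ext <| by
    simp only [signedUnit] at h
    linarith

theorem signedUnit_zero : signedUnit 0 = -1 := by
  rw [signedUnit, ← ENNReal.bot_eq_zero, map_bot, Set.Icc.coe_bot]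
  norm_num

theorem signedUnit_top : signedUnit ⊤ = 1 := by
  rw [signedUnit, map_top, Set.Icc.coe_top]
  norm_num

theorem abs_signedUnit_le (z : ℝ≥0∞) : |signedUnit z| ≤ 1 := by
  have h := (ENNReal.orderIsoUnitIntervalBirational z).2
  rw [abs_le, signedUnit]
  constructor <;> linarith [h.1, h.2]

theorem exists_signedUnit_eq {x : ℝ} (hx : |x| ≤ 1) : ∃ z, signedUnit z = x := by
  rw [abs_le] at hx
  obtain ⟨z, hz⟩ := ENNReal.orderIsoUnitIntervalBirational.surjective
    ⟨(x + 1) / 2, by constructor <;> linarith⟩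
  refine ⟨z, ?_⟩
  rw [signedUnit, hz]
  ring

end SignedUnit

/-! ### Fibers of the projection -/

section Projection

open Filter Topology Real

variable {ι : Type*} {n l r : ℕ}

/-- The map `piN` is the projection of the cyclohedron onto the associahedron: the continuous map
with `piN ∘ β_n = α_n`. -/
structure IsAssocProjection (piN : ↥(Cycl n) → ↥(Assoc n)) : Prop where
  continuous : Continuous piN
  apply_betaMap : ∀ t (ht : t ∈ openSimplex n),
    piN ⟨betaMap n t, subset_closure (Set.mem_image_of_mem _ ht)⟩ =
      ⟨alphaMap n t, subset_closure (Set.mem_image_of_mem _ ht)⟩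

variable {piN : ↥(Cycl n) → ↥(Assoc n)} {G : Filter ι} {t : ι → Fin n → ℝ}

namespace IsAssocProjection

theorem tendsto_alphaMap (hpi : IsAssocProjection piN) {y : ↥(Cycl n)}
    (ht : ∀ᶠ s in G, t s ∈ openSimplex n) (hy : Tendsto (fun s => betaMap n (t s)) G (𝓝 y.1)) :
    Tendsto (fun s => alphaMap n (t s)) G (𝓝 (piN y).1) := by
  let D : Set ι := {s | t s ∈ openSimplex n}
  have hD : Set.range ((↑) : D → ι) ∈ G := Subtype.range_coe ▸ ht
  rw [← tendsto_comap'_iff hD] at hy ⊢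
  have hCycl : Tendsto (fun s : D => (⟨betaMap n (t s), subset_closure
      (Set.mem_image_of_mem _ s.2)⟩ : ↥(Cycl n))) (comap (↑) G) (𝓝 y) :=
    tendsto_subtype_rng.2 hy
  refine (((continuous_subtype_val.comp hpi.continuous).tendsto y).comp hCycl).congr fun s => ?_
  exact congrArg Subtype.val (hpi.apply_betaMap (t s) s.2)

theorem tendsToRatios (hpi : IsAssocProjection piN) {y : ↥(Cycl n)}
    (ht : ∀ᶠ s in G, t s ∈ openSimplex n) (hy : Tendsto (fun s => betaMap n (t s)) G (𝓝 y.1)) :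
    TendsToRatios (n + 1) (ratioNat (piN y).1) G (fun s => extNat (t s)) :=
  tendsToRatios_extNat_iff.2 ⟨ht, hpi.tendsto_alphaMap ht hy⟩

theorem exists_tendsto_betaMap (hpi : IsAssocProjection piN) [G.NeBot] {x : ↥(Assoc n)}
    (ht : ∀ᶠ s in G, t s ∈ openSimplex n)
    (hx : Tendsto (fun s => alphaMap n (t s)) G (𝓝 x.1)) :
    ∃ y, piN y = x ∧ ∃ G' ≤ G, G'.NeBot ∧ Tendsto (fun s => betaMap n (t s)) G' (𝓝 y.1) := by
  obtain ⟨y, hy, hcluster⟩ : ∃ y ∈ Cycl n, MapClusterPt y G fun s => betaMap n (t s) :=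
    isCompact_Cycl n (le_principal_iff.2 <| mem_map.2 <|
      ht.mono fun s hs => subset_closure (Set.mem_image_of_mem _ hs))
  obtain ⟨hne, hlim⟩ : (G ⊓ comap (fun s => betaMap n (t s)) (𝓝 y)).NeBot ∧
      Tendsto (fun s => betaMap n (t s)) (G ⊓ comap (fun s => betaMap n (t s)) (𝓝 y)) (𝓝 y) :=
    ⟨neBot_inf_comap_iff_map.2 (inf_comm (𝓝 y) _ ▸ hcluster), tendsto_comap.mono_left inf_le_right⟩
  exact ⟨⟨y, hy⟩, Subtype.ext (tendsto_nhds_unique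
      (hpi.tendsto_alphaMap (ht.filter_mono inf_le_left) hlim) (hx.mono_left inf_le_left)),
    _, inf_le_left, hne, hlim⟩

end IsAssocProjection

theorem tendsto_comap_betaMap (y : ↥(Cycl n)) :
    Tendsto (betaMap n) (comap (betaMap n) (𝓝 y.1) ⊓ 𝓟 (openSimplex n)) (𝓝 y.1) :=
  tendsto_comap.mono_left inf_le_left

theorem tendsto_sTilde {y : (Fin n → ℝ) × (TripleIdx n → ℝ≥0∞)}
    (hy : Tendsto (fun s => betaMap n (t s)) G (𝓝 y)) (q : TripleIdx n) :
    Tendsto (fun s => sTilde n (t s) q) G (𝓝 (y.2 q)) :=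
  tendsto_pi_nhds.1 ((continuous_snd.tendsto _).comp hy) q

theorem apply_eq_ratioNat [G.NeBot] {y : (Fin n → ℝ) × (TripleIdx n → ℝ≥0∞)}
    {X : ℕ → ℕ → ℕ → ℝ} (hy : Tendsto (fun s => betaMap n (t s)) G (𝓝 y))
    (h : TendsToRatios (n + 1) X G (fun s => extNat (t s))) (p : Fin n) :
    y.1 p = X 0 (p + 1) (n + 1) := by
  have hlim := h.tendsto_apply p.1.succ_pos (Nat.succ_lt_succ p.2)
  simp only [Nat.succ_eq_add_one, extNat_succ] at hlim
  exact tendsto_nhds_unique (tendsto_pi_nhds.1 ((continuous_fst.tendsto _).comp hy) p) hlim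

namespace IsBoundaryEnum

variable {S : Psi (n + 1)} {a : Fin l → ℕ} {b : Fin r → ℕ} {x : ↥(Assoc n)}

/-- The index `(0, a i, b j)` of the coordinate of the cyclohedron comparing the `i`-th bracket at
the left end with the `j`-th bracket at the right end. -/
def tripleIdx (hab : IsBoundaryEnum (n + 1) (natBrackets S) a b) (i : Fin l) (j : Fin r) :
    TripleIdx n :=
  have hS := isBracketSystem_natBrackets n.succ_pos S
  ⟨(0, ⟨a i, (hab.left i).2⟩, ⟨b j, hab.right_lt hS j⟩),
    fun h => (hab.left_pos hS i).ne (congrArg Fin.val h),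
    fun h => (hab.right j).2.ne (congrArg Fin.val h),
    fun h => (hab.left_lt_right hS i j).ne (congrArg Fin.val h)⟩

variable (hab : IsBoundaryEnum (n + 1) (natBrackets S) a b) (hpi : IsAssocProjection piN)
include hpi

theorem ratioTendsto {y : ↥(Cycl n)} (hy : (piN y).1 ∈ openStratum n S)
    (ht : ∀ᶠ s in G, t s ∈ openSimplex n) (hlim : Tendsto (fun s => betaMap n (t s)) G (𝓝 y.1))
    (i : Fin l) (j : Fin r) :
    RatioTendsto G (fun s => extNat (t s) (a i)) (fun s => 1 - extNat (t s) (b j))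
      (y.1.2 (hab.tripleIdx i j)) :=
  (tendsto_sTilde_iff (isStratumPoint_ratioNat hy) (hpi.tendsToRatios ht hlim)
    (q := hab.tripleIdx i j) rfl (hab.left i).1 (hab.right j).1).1 (tendsto_sTilde hlim _)

theorem isStaircase_of_mem_fiber {y : ↥(Cycl n)} (hy : (piN y).1 ∈ openStratum n S) :
    IsStaircase 0 ⊤ fun i j => y.1.2 (hab.tripleIdx i j) := by
  have hne := neBot_comap_nhds_inf_principal y.2
  have ht : openSimplex n ∈ comap (betaMap n) (𝓝 y.1) ⊓ 𝓟 (openSimplex n) :=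
    mem_inf_of_right (mem_principal_self _)
  have hlim := tendsto_comap_betaMap y
  exact (hpi.tendsToRatios ht hlim).isStaircase (isBracketSystem_natBrackets n.succ_pos S)
    (isStratumPoint_ratioNat hy) hab (hab.ratioTendsto hpi hy ht hlim)

/-- The supremum of two filters converging to `y` and to `y'` converges in every coordinate, since
it converges in the coordinates `hab.tripleIdx i j`; hence `y` and `y'` agree. -/
theorem eq_of_mem_fiber {y y' : ↥(Cycl n)} (hx : x.1 ∈ openStratum n S) (hy : piN y = x)
    (hy' : piN y' = x) (hyy' : ∀ i j, y.1.2 (hab.tripleIdx i j) = y'.1.2 (hab.tripleIdx i j)) :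
    y = y' := by
  have hne := neBot_comap_nhds_inf_principal y.2
  have hne' := neBot_comap_nhds_inf_principal y'.2
  have hlim := tendsto_comap_betaMap y
  have hlim' := tendsto_comap_betaMap y'
  set H := comap (betaMap n) (𝓝 y.1) ⊓ 𝓟 (openSimplex n)
  set H' := comap (betaMap n) (𝓝 y'.1) ⊓ 𝓟 (openSimplex n)
  have ht : openSimplex n ∈ H := mem_inf_of_right (mem_principal_self _)
  have ht' : openSimplex n ∈ H' := mem_inf_of_right (mem_principal_self _)
  have h : TendsToRatios (n + 1) (ratioNat x.1) H extNat := hy ▸ hpi.tendsToRatios ht hlim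
  have h' : TendsToRatios (n + 1) (ratioNat x.1) H' extNat := hy' ▸ hpi.tendsToRatios ht' hlim'
  have hsup : TendsToRatios (n + 1) (ratioNat x.1) (H ⊔ H') extNat := by
    rw [tendsToRatios_extNat_iff] at h h' ⊢
    exact ⟨eventually_sup.2 ⟨h.1, h'.1⟩, h.2.sup h'.2⟩
  have hcl (p q : ℕ) (hp : (0, p) ∈ natBrackets S) (hq : (q, n + 1) ∈ natBrackets S) (hp0 : 0 < p)
      (hpq : p < q) (hqn : q < n + 1) :
      HasRatioLim (H ⊔ H') (fun t => extNat t p) (fun t => 1 - extNat t q) := by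
    obtain ⟨i, rfl⟩ := (hab.mem_left p).1 ⟨hp, hpq.trans hqn⟩
    obtain ⟨j, rfl⟩ := (hab.mem_right q).1 ⟨hq, hp0.trans hpq⟩
    exact ⟨_, (hab.ratioTendsto hpi (hy ▸ hx) ht hlim i j).sup
      (hyy' i j ▸ hab.ratioTendsto hpi (hy' ▸ hx) ht' hlim' i j)⟩
  refine Subtype.ext (Prod.ext (funext fun p => ?_) (funext fun q => ?_))
  · rw [apply_eq_ratioNat hlim h, apply_eq_ratioNat hlim' h']
  · obtain ⟨L, hL⟩ := hsup.hasRatioLim_abs_sin_sub (isBracketSystem_natBrackets n.succ_pos S)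
      (isStratumPoint_ratioNat hx) hcl q.1.1.2 q.1.2.1.2 q.1.2.2.2 (Fin.val_ne_of_ne q.2.1)
      (Fin.val_ne_of_ne q.2.2.1) (Fin.val_ne_of_ne q.2.2.2)
    have hLq : Tendsto (fun t => sTilde n t q) (H ⊔ H') (𝓝 L) := by
      simp only [sTilde_eq]
      exact hL
    exact (tendsto_nhds_unique (tendsto_sTilde hlim q) (hLq.mono_left le_sup_left)).trans
      (tendsto_nhds_unique (tendsto_sTilde hlim' q) (hLq.mono_left le_sup_right)).symm

theorem exists_mem_fiber (hx : x.1 ∈ openStratum n S) {c : Fin l → Fin r → ℝ≥0∞}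
    (hc : IsStaircase 0 ⊤ c) : ∃ y, piN y = x ∧ ∀ i j, y.1.2 (hab.tripleIdx i j) = c i j := by
  have hS := isBracketSystem_natBrackets n.succ_pos S
  have hne := neBot_comap_nhds_inf_principal x.2
  obtain ⟨τ, hτ, hτc⟩ := (tendsToRatios_comap_alphaMap x.1).exists_of_isStaircase hS
    (isStratumPoint_ratioNat hx) hab hc
  set t : ℝ → Fin n → ℝ := fun δ q => τ δ (q + 1)
  have hext : ∀ᶠ δ in 𝓝[>] 0, ∀ p ≤ n + 1, τ δ p = extNat (t δ) p := hτ.eventually_eq_extNat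
  obtain ⟨ht, hlim⟩ := tendsToRatios_extNat_iff.1 (hτ.congr hext)
  obtain ⟨y, rfl, G, hG, hGne, hy⟩ := hpi.exists_tendsto_betaMap ht hlim
  refine ⟨y, rfl, fun i j => tendsto_nhds_unique
    (hab.ratioTendsto hpi hx (ht.filter_mono hG) hy i j) ?_⟩
  refine RatioTendsto.congr (Tendsto.mono_left (hτc i j) hG) ?_ ?_
  · filter_upwards [hext.filter_mono hG] with δ hδ using hδ _ (hab.left i).2.le
  · filter_upwards [hext.filter_mono hG] with δ hδ
    rw [hδ _ (hab.right_lt hS j).le]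

include hab in
theorem nonempty_fiber_homeomorph (hx : x.1 ∈ openStratum n S) :
    Nonempty (↥(piN ⁻¹' {x}) ≃ₜ {c : Fin l × Fin r → ℝ |
      (∀ p, |c p| ≤ 1) ∧ IsStaircase (-1) 1 (fun i j => c (i, j))}) := by
  have : CompactSpace ↥(Cycl n) := isCompact_iff_compactSpace.1 (isCompact_Cycl n)
  have : CompactSpace ↥(piN ⁻¹' {x}) :=
    isCompact_iff_compactSpace.1 (isClosed_singleton.preimage hpi.continuous).isCompact
  have hiff (c : Fin l → Fin r → ℝ≥0∞) :
      IsStaircase (-1) 1 (fun i j => signedUnit (c i j)) ↔ IsStaircase 0 ⊤ c := by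
    rw [← signedUnit_zero, ← signedUnit_top, IsStaircase.map_iff signedUnit_injective]
  let f : ↥(piN ⁻¹' {x}) → {c : Fin l × Fin r → ℝ |
      (∀ p, |c p| ≤ 1) ∧ IsStaircase (-1) 1 (fun i j => c (i, j))} := fun y =>
    ⟨fun p => signedUnit (y.1.1.2 (hab.tripleIdx p.1 p.2)), fun p => abs_signedUnit_le _,
      (hiff _).2 (hab.isStaircase_of_mem_fiber hpi (by rwa [Set.mem_singleton_iff.1 y.2]))⟩
  have hf : Continuous f := by
    refine (continuous_pi fun p => continuous_signedUnit.comp ?_).subtype_mk _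
    exact (continuous_apply _).comp
      (continuous_snd.comp (continuous_subtype_val.comp continuous_subtype_val))
  have hf_inj : f.Injective := fun y y' h =>
    Subtype.ext <| hab.eq_of_mem_fiber hpi hx y.2 y'.2 fun i j =>
      signedUnit_injective (congrFun (congrArg Subtype.val h) (i, j))
  have hf_surj : f.Surjective := by
    rintro ⟨M, hM, hstair⟩
    choose c hc using fun p => exists_signedUnit_eq (hM p)
    obtain rfl : (fun p => signedUnit (c p)) = M := funext hc
    obtain ⟨y, hy, hyc⟩ := hab.exists_mem_fiber hpi hx ((hiff fun i j => c (i, j)).1 hstair)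
    exact ⟨⟨y, hy⟩, Subtype.ext (funext fun p => congrArg signedUnit (hyc p.1 p.2))⟩
  exact ⟨Continuous.homeoOfEquivCompactToT2 (f := Equiv.ofBijective f ⟨hf_inj, hf_surj⟩) hf⟩

end IsBoundaryEnum

end Projection

/-- **Proposition 6.1(iii) + Lemma 3.2.** Let `π_n : Cycl_n → Assoc_n` be the (unique)
continuous projection with `π_n ∘ β_n = α_n`, and let `S ∈ Ψ([n+1])` have exactly `ℓ`
left-most nodes (brackets containing the minimal leaf `0`) and `r` right-most nodes
(brackets containing the maximal leaf `n+1`).  Then the preimage under `π_n` of every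
point of the open stratum of `Assoc_n` corresponding to `S` is homeomorphic to the
geometric realization of the poset `X_{ℓ,r}`. -/
theorem fiber_of_projection_homeomorph_realization_XWord (n : ℕ) (hn : 1 ≤ n)
    (piN : ↥(Cycl n) → ↥(Assoc n)) (hcont : Continuous piN)
    (hcomm : ∀ t (ht : t ∈ openSimplex n),
      piN ⟨betaMap n t, subset_closure (Set.mem_image_of_mem _ ht)⟩ =
        ⟨alphaMap n t, subset_closure (Set.mem_image_of_mem _ ht)⟩)
    (S : Psi (n + 1)) (l r : ℕ)
    (hl : (S.1.filter fun b => b.1.1 = 0).card = l)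
    (hr : (S.1.filter fun b => b.1.2 = n + 1).card = r)
    (x : ↥(Assoc n)) (hx : x.1 ∈ openStratum n S) :
    Nonempty (↥(piN ⁻¹' {x}) ≃ₜ ↥(PosetRealization (XWord l r))) := by
  obtain ⟨a, b, hab⟩ := exists_isBoundaryEnum S hl hr
  obtain ⟨e⟩ := nonempty_PosetRealization_XWord_homeomorph l r
  obtain ⟨f⟩ := hab.nonempty_fiber_homeomorph ⟨hcont, hcomm⟩ hx
  exact ⟨f.trans e.symm⟩
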